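/- arXiv:2405.10152 — 4 statements merged into one kernel-verified Lean document; each statement's English description precedes it below -/
import Mathlib

section
/- In an extensional BC±I-algebra, the braid is natural on elements of arity 1 → 1: if a has arity 1 → 1, then a ∘ C⁺ = C⁺ ∘ (B a) and a ∘ C⁻ = C⁻ ∘ (B a). -/
namespace Paper

/-- An applicative structure with distinguished elements `B`, `C⁺`, `C⁻`, `I`. -/
structure BCStruct (α : Type*) where
  ap : α → α → α
  B : α
  Cp : α
  Cm : α
  I : α

namespace BCStruct

variable {α : Type*}

/-- `a ∘ b := B a b`. -/
def comp (S : BCStruct α) (a b : α) : α := S.ap (S.ap S.B a) b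

/-- Powers: `a⁰ = I`, `a^(n+1) = a ∘ aⁿ`. -/
def pow (S : BCStruct α) (a : α) : ℕ → α
  | 0 => S.I
  | n + 1 => S.comp a (S.pow a n)

/-- `a• := C⁺ I a`. -/
def bul (S : BCStruct α) (a : α) : α := S.ap (S.ap S.Cp S.I) a

/-- `a` has arity `m → n` iff `(C⁺ B a) ∘ Bᵐ = (B a) ∘ Bⁿ`. -/
def hasArity (S : BCStruct α) (a : α) (m n : ℕ) : Prop :=
  S.comp (S.ap (S.ap S.Cp S.B) a) (S.pow S.B m) = S.comp (S.ap S.B a) (S.pow S.B n)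

/-- The axioms of an extensional BC±I-algebra. -/
structure IsExt (S : BCStruct α) : Prop where
  hB : ∀ a b c, S.ap (S.ap (S.ap S.B a) b) c = S.ap a (S.ap b c)
  hCp : ∀ a b c, S.ap (S.ap (S.ap S.Cp a) b) c = S.ap (S.ap a c) b
  hCm : ∀ a b c, S.ap (S.ap (S.ap S.Cm a) b) c = S.ap (S.ap a c) b
  hI : ∀ a, S.ap S.I a = a
  hC2 : ∀ a b, S.ap (S.ap S.Cp a) b = S.ap (S.ap S.Cm a) b
  hLam : S.ap S.B S.I = S.I
  hRho : S.ap (S.ap S.Cp S.B) S.I = S.ap S.B S.I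
  hAlpha : S.comp (S.ap (S.ap S.Cp S.B) S.B) (S.comp S.B S.B) = S.comp (S.ap S.B S.B) S.B
  hCox1p : S.comp S.Cp S.Cm = S.ap S.B (S.ap S.B S.I)
  hCox1m : S.comp S.Cm S.Cp = S.ap S.B (S.ap S.B S.I)
  hCox2p : S.comp (S.ap (S.ap S.Cp S.B) S.Cp) (S.comp S.B S.B)
      = S.comp (S.ap S.B S.Cp) (S.comp S.B S.B)
  hCox2m : S.comp (S.ap (S.ap S.Cp S.B) S.Cm) (S.comp S.B S.B)
      = S.comp (S.ap S.B S.Cm) (S.comp S.B S.B)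
  hCox3p : S.comp (S.ap S.B S.Cp) (S.comp S.Cp (S.ap S.B S.Cp))
      = S.comp S.Cp (S.comp (S.ap S.B S.Cp) S.Cp)
  hCox3m : S.comp (S.ap S.B S.Cm) (S.comp S.Cm (S.ap S.B S.Cm))
      = S.comp S.Cm (S.comp (S.ap S.B S.Cm) S.Cm)
  hBCp : S.comp (S.ap S.B S.B) S.Cp = S.comp S.Cp (S.comp (S.ap S.B S.Cp) S.B)
  hBCm : S.comp (S.ap S.B S.B) S.Cm = S.comp S.Cm (S.comp (S.ap S.B S.Cm) S.B)

/-- The axioms for twists `θ⁺ = tp`, `θ⁻ = tm` making the algebra balanced. -/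
structure IsBalanced (S : BCStruct α) (tp tm : α) : Prop where
  arP : S.comp (S.ap S.B tp) S.B = S.comp (S.ap (S.ap S.Cp S.B) tp) S.B
  arM : S.comp (S.ap S.B tm) S.B = S.comp (S.ap (S.ap S.Cp S.B) tm) S.B
  invPM : S.comp tp tm = S.ap S.B S.I
  invMP : S.comp tm tp = S.ap S.B S.I
  natBulP : ∀ a, S.ap (S.ap S.Cp tp) a = S.ap (S.ap S.Cp S.I) a
  natBulM : ∀ a, S.ap (S.ap S.Cp tm) a = S.ap (S.ap S.Cp S.I) a
  natBP : S.comp S.B tp = S.comp tp (S.comp S.Cp (S.comp tp (S.comp S.Cp S.B)))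
  natBM : S.comp S.B tm = S.comp tm (S.comp S.Cm (S.comp tm (S.comp S.Cm S.B)))

/-- The axioms for a trace combinator `Tr` (Left/Right Tightening, Yanking, Exchange). -/
structure IsTrace (S : BCStruct α) (tp tm Tr : α) : Prop where
  leftT : S.comp (S.ap (S.ap S.Cp S.B) Tr) S.B = S.comp (S.ap S.B Tr) (S.pow S.B 2)
  rightT : S.comp (S.ap S.B Tr) (S.comp (S.ap (S.ap S.Cp S.B) S.B) S.B) = S.comp S.B Tr
  yankP : S.ap Tr S.Cp = tp
  yankM : S.ap Tr S.Cm = tm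
  exch : S.comp (S.comp (S.comp Tr Tr) (S.ap (S.ap S.Cp S.B) S.Cm)) (S.ap S.B S.Cp)
      = S.comp Tr Tr

/-- A duality: `α• ∘ B = (B α) ∘ B²`, `β• ∘ B³ = B β`, `α ∘ (B β) = B I`,
`(B α) ∘ β = B I`. -/
structure IsDuality (S : BCStruct α) (al be : α) : Prop where
  arAl : S.comp (S.bul al) S.B = S.comp (S.ap S.B al) (S.pow S.B 2)
  arBe : S.comp (S.bul be) (S.pow S.B 3) = S.ap S.B be
  d1 : S.comp al (S.ap S.B be) = S.ap S.B S.I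
  d2 : S.comp (S.ap S.B al) be = S.ap S.B S.I

/-- A ribbon structure: a duality compatible with the twists. -/
structure IsRibbon (S : BCStruct α) (tp tm al be : α) : Prop where
  dual : IsDuality S al be
  dTp : S.comp al tp = S.comp al (S.ap S.B tp)
  dTm : S.comp al tm = S.comp al (S.ap S.B tm)

end BCStruct

end Paper

theorem braid_key {M : Type*} [Monoid M] (φ : M →* M) (B C D a b J : M)
    (hCD : C * D = 1) (hDC : D * C = 1)
    (hBn : ∀ x, B * φ x = φ (φ x) * B)
    (hC : ∀ x, C * φ (φ x) = φ (φ x) * C)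
    (hBC : φ B * C = C * (φ C * B))
    (hb : ∀ x, b * φ x = x * b)
    (hbD : φ b = b * D)
    (hJ : ∀ x, J * φ x = x * J) (hJB : J * B = 1)
    (ar : b * (B * B) = φ a * B) : a * D = D * φ a := by
  have e1 : b * D * (φ B * φ B) = φ (φ a) * φ B := by
    rw [← hbD, ← map_mul, ← map_mul, ar, map_mul]
  have e2 : b * D * (φ B * φ B) * C = C * (φ C * (φ a * B)) := by
    calc b * D * (φ B * φ B) * C = b * D * (φ B * (φ B * C)) := by simp only [mul_assoc]
      _ = b * D * ((φ B * C) * (φ C * B)) := by 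
        rw [mul_assoc (φ B) C, ← hBC]
      _ = b * (D * C) * (φ C * (B * φ C) * B) := by rw [hBC]; simp only [mul_assoc]
      _ = (b * φ C) * φ (φ C) * (B * B) := by rw [hDC, hBn]; simp only [mul_assoc, one_mul]
      _ = C * (b * φ (φ C)) * (B * B) := by rw [hb]; simp only [mul_assoc]
      _ = C * (φ C * (b * (B * B))) := by rw [hb]; simp only [mul_assoc]
      _ = _ := by rw [ar]
  have e3 : φ (φ a) * φ B * C = C * (φ (φ a) * (φ C * B)) := by
    rw [mul_assoc, hBC, ← mul_assoc, ← hC, mul_assoc]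
  have e4 : C * (φ (C * a) * B) = C * (φ (φ a * C) * B) := by
    rw [map_mul, map_mul, mul_assoc, mul_assoc, ← e2, e1, e3]
  have e5 : φ (C * a) * B = φ (φ a * C) * B := by
    have := congrArg (D * ·) e4
    simpa only [← mul_assoc, hDC, one_mul] using this
  have e6 : C * a = φ a * C := by
    have := congrArg (J * ·) e5
    simpa only [← mul_assoc, hJ, mul_assoc _ J B, hJB, mul_one] using this
  calc a * D = D * (C * a) * D := by rw [← mul_assoc, hDC, one_mul]
    _ = D * φ a * (C * D) := by rw [e6]; simp only [mul_assoc]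
    _ = D * φ a := by rw [hCD, mul_one]

/-- The braid is natural on elements of arity `1 → 1`. -/
theorem stmt_12 {α : Type*} (S : Paper.BCStruct α) (hS : S.IsExt)
    {a : α} (h : S.hasArity a 1 1) :
    S.comp a S.Cp = S.comp S.Cp (S.ap S.B a) ∧
    S.comp a S.Cm = S.comp S.Cm (S.ap S.B a) := by
  obtain ⟨hB, hCp, hCm, hI, hC2, hLam, hRho, hAlpha, h1p, h1m, h2p, h2m, -, -, hBp, hBm⟩ := hS
  unfold Paper.BCStruct.hasArity at h
  simp only [Paper.BCStruct.pow] at h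
  have ilef : ∀ x, S.comp S.I x = x := fun x => by
    unfold Paper.BCStruct.comp; rw [hLam, hI]
  have irig : ∀ x, S.comp x S.I = x := fun x => by
    have := congrArg (fun t => S.ap t x) hRho
    simp only [hCp, hLam, hI] at this
    exact this
  have capp : ∀ x y z, S.ap (S.comp x y) z = S.ap x (S.ap y z) := hB
  have cdef : ∀ x y, S.ap (S.ap S.B x) y = S.comp x y := fun _ _ => rfl
  have nB : ∀ x, S.comp S.B (S.ap S.B x) = S.comp (S.ap S.B (S.ap S.B x)) S.B := fun x => by
    have := congrArg (fun t => S.ap t x) hAlpha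
    simpa only [capp, hCp, cdef] using this.symm
  have hm : ∀ x y, S.ap S.B (S.comp x y) = S.comp (S.ap S.B x) (S.ap S.B y) := fun x y => by
    have := congrArg (fun t => S.ap t y) (nB x)
    simpa only [capp, cdef] using this
  have assoc : ∀ x y z, S.comp (S.comp x y) z = S.comp x (S.comp y z) := fun x y z => by
    rw [← cdef (S.comp x y), hm, capp]; rfl
  have nCp : ∀ x, S.comp S.Cp (S.ap S.B (S.ap S.B x))
      = S.comp (S.ap S.B (S.ap S.B x)) S.Cp := fun x => by
    have := congrArg (fun t => S.ap t x) h2p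
    simpa only [capp, hCp, cdef] using this.symm
  have nCm : ∀ x, S.comp S.Cm (S.ap S.B (S.ap S.B x))
      = S.comp (S.ap S.B (S.ap S.B x)) S.Cm := fun x => by
    have := congrArg (fun t => S.ap t x) h2m
    simpa only [capp, hCp, cdef] using this.symm
  have BCp : ∀ x y, S.ap S.B (S.ap (S.ap S.Cp x) y)
      = S.ap (S.ap S.Cp (S.comp S.Cp (S.ap S.B x))) y := fun x y => by
    have := congrArg (fun t => S.ap (S.ap t x) y) hBp
    simpa only [capp, cdef] using this
  have BCm : ∀ x y, S.ap S.B (S.ap (S.ap S.Cm x) y)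
      = S.ap (S.ap S.Cm (S.comp S.Cm (S.ap S.B x))) y := fun x y => by
    have := congrArg (fun t => S.ap (S.ap t x) y) hBm
    simpa only [capp, cdef] using this
  -- `C x y = y• ∘ x`
  have bul : ∀ x y, S.ap (S.ap S.Cp x) y = S.comp (S.bul y) x := fun x y => by
    have := congrArg (fun t => S.ap t x) (BCp S.I y)
    simp only [hCp, capp, cdef, hLam, hI, ilef, irig] at this
    exact this.symm
  have nb : ∀ y x, S.comp (S.bul y) (S.ap S.B x) = S.comp x (S.bul y) := fun y x => by
    have := congrArg (fun t => S.ap (S.ap t S.I) y) (nCp x)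
    simpa only [capp, cdef, bul, irig] using this
  have bp : ∀ y, S.ap S.B (S.bul y) = S.comp (S.bul y) S.Cp := fun y => by
    have := BCp S.I y
    simpa only [bul, hLam, irig] using this
  have bm : ∀ y, S.ap S.B (S.bul y) = S.comp (S.bul y) S.Cm := fun y => by
    have := BCm S.I y
    simpa only [← hC2, bul, hLam, irig] using this
  have JB : S.comp (S.bul S.I) S.B = S.I := by rw [← bul, hRho, hLam]
  rw [irig, bul, assoc] at h
  rw [hLam, hLam] at h1p h1m
  letI : Monoid α :=
    { mul := S.comp, one := S.I, mul_assoc := assoc, one_mul := ilef, mul_one := irig }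
  let φ : α →* α := { toFun := S.ap S.B, map_one' := hLam, map_mul' := hm }
  exact ⟨braid_key φ S.B S.Cm S.Cp a (S.bul a) (S.bul S.I) h1m h1p nB nCm hBm (nb a) (bp a)
      (nb S.I) JB h,
    braid_key φ S.B S.Cp S.Cm a (S.bul a) (S.bul S.I) h1p h1m nB nCp hBp (nb a) (bm a)
      (nb S.I) JB h⟩
end

section
/- In a balanced extensional BC±I-algebra, the twist is natural on elements of arity 1 → 1: if a has arity 1 → 1, then a ∘ θ⁺ = θ⁺ ∘ a and a ∘ θ⁻ = θ⁻ ∘ a. -/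
namespace Paper.BCStruct

variable {α : Type*} {S : BCStruct α}

theorem IsExt.swap (hS : S.IsExt) : (BCStruct.mk S.ap S.B S.Cm S.Cp S.I).IsExt where
  hB := hS.hB
  hCp := hS.hCm
  hCm := hS.hCp
  hI := hS.hI
  hC2 a b := (hS.hC2 a b).symm
  hLam := hS.hLam
  hRho := (hS.hC2 _ _).symm.trans hS.hRho
  hAlpha := by have := hS.hAlpha; rw [hS.hC2] at this; exact this
  hCox1p := hS.hCox1m
  hCox1m := hS.hCox1p
  hCox2p := by have := hS.hCox2m; rw [hS.hC2] at this; exact this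
  hCox2m := by have := hS.hCox2p; rw [hS.hC2] at this; exact this
  hCox3p := hS.hCox3m
  hCox3m := hS.hCox3p
  hBCp := hS.hBCm
  hBCm := hS.hBCp

theorem IsBalanced.swap (hS : S.IsExt) {tp tm : α} (h : S.IsBalanced tp tm) :
    (BCStruct.mk S.ap S.B S.Cm S.Cp S.I).IsBalanced tm tp where
  arP := by have := h.arM; rw [hS.hC2] at this; exact this
  arM := by have := h.arP; rw [hS.hC2] at this; exact this
  invPM := h.invMP
  invMP := h.invPM
  natBulP a := by have := h.natBulM a; rw [hS.hC2, hS.hC2] at this; exact this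
  natBulM a := by have := h.natBulP a; rw [hS.hC2, hS.hC2] at this; exact this
  natBP := h.natBM
  natBM := h.natBP

theorem IsExt.comp_ap (hS : S.IsExt) (a b c : α) : S.ap (S.comp a b) c = S.ap a (S.ap b c) :=
  hS.hB a b c

theorem IsExt.comp_I (hS : S.IsExt) (a : α) : S.comp a S.I = a := by
  have := congrArg (fun z => S.ap z a) hS.hRho
  simp only [hS.hCp, hS.hLam, hS.hI] at this; exact this

theorem IsExt.I_comp (hS : S.IsExt) (a : α) : S.comp S.I a = a := by
  unfold comp; rw [hS.hLam, hS.hI]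

theorem IsExt.B_comp (hS : S.IsExt) (a b : α) :
    S.ap S.B (S.comp a b) = S.comp (S.ap S.B a) (S.ap S.B b) := by
  have := congrArg (fun z => S.ap (S.ap z a) b) hS.hAlpha
  simp only [hS.comp_ap, hS.hCp, hS.hB] at this
  exact this.symm

theorem IsExt.assoc (hS : S.IsExt) (a b c : α) :
    S.comp (S.comp a b) c = S.comp a (S.comp b c) := by
  have := congrArg (fun z => S.ap z c) (hS.B_comp a b)
  simp only [hS.comp_ap] at this; exact this

/-- `C⁺ ((B a) ∘ g) = (B a) ∘ (C⁺ g)`, applied to `y`. -/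
theorem IsExt.C_Bcomp (hS : S.IsExt) (a g y : α) :
    S.ap (S.ap S.Cp (S.comp (S.ap S.B a) g)) y = S.comp a (S.ap (S.ap S.Cp g) y) := by
  have := congrArg (fun z => S.ap (S.ap (S.ap z a) g) y) hS.hCox2p
  simp only [hS.comp_ap, hS.hCp, hS.hB] at this
  exact this.symm

theorem IsExt.B_Cp (hS : S.IsExt) (x y : α) :
    S.ap S.B (S.ap (S.ap S.Cp x) y) = S.ap (S.ap S.Cp (S.comp S.Cp (S.ap S.B x))) y := by
  have := congrArg (fun z => S.ap (S.ap z x) y) hS.hBCp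
  simp only [hS.comp_ap, hS.hB] at this; exact this

theorem IsExt.B_Cm (hS : S.IsExt) (x y : α) :
    S.ap S.B (S.ap (S.ap S.Cp x) y) = S.ap (S.ap S.Cp (S.comp S.Cm (S.ap S.B x))) y := by
  have := hS.swap.B_Cp x y
  simp only [← hS.hC2] at this
  exact this

theorem IsExt.C_comp (hS : S.IsExt) (x y z : α) :
    S.comp (S.ap (S.ap S.Cp x) y) z = S.ap (S.ap S.Cp (S.comp x z)) y := by
  have := congrArg (fun w => S.ap w z) (hS.B_Cp x y)
  simp only [hS.comp_ap, hS.hCp] at this; exact this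

theorem IsExt.C_Cp_eq (hS : S.IsExt) (d : α) :
    S.ap (S.ap S.Cp S.Cp) d = S.ap (S.ap S.Cp S.Cm) d := by
  have := (hS.B_Cp S.I d).symm.trans (hS.B_Cm S.I d)
  simpa only [hS.hLam, hS.comp_I] using this

theorem IsExt.CmCp (hS : S.IsExt) : S.comp S.Cm S.Cp = S.I := by
  rw [hS.hCox1m, hS.hLam, hS.hLam]

theorem IsExt.CpCm (hS : S.IsExt) : S.comp S.Cp S.Cm = S.I := by
  rw [hS.hCox1p, hS.hLam, hS.hLam]

/-- `(B C⁺) ∘ B = C⁻ ∘ (B B) ∘ C⁺`. -/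
theorem IsExt.BC_B (hS : S.IsExt) :
    S.comp (S.ap S.B S.Cp) S.B = S.comp S.Cm (S.comp (S.ap S.B S.B) S.Cp) := by
  rw [hS.hBCp, ← hS.assoc, hS.CmCp, hS.I_comp]

/-- `B ∘ C⁻ = (B C⁻) ∘ C⁻ ∘ (B B)`. -/
theorem IsExt.B_comp_Cm (hS : S.IsExt) :
    S.comp S.B S.Cm = S.comp (S.ap S.B S.Cm) (S.comp S.Cm (S.ap S.B S.B)) := by
  have h1 : S.comp (S.ap S.B S.Cm) (S.comp (S.ap S.B S.Cp) S.B) = S.B := by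
    rw [← hS.assoc, ← hS.B_comp, hS.CmCp, hS.hLam, hS.I_comp]
  have h2 : S.comp (S.comp (S.ap S.B S.Cm) (S.comp (S.ap S.B S.Cp) S.B)) S.Cm
      = S.comp S.B S.Cm := by rw [h1]
  rw [← h2, hS.BC_B]
  simp only [hS.assoc, hS.CpCm, hS.comp_I]

/-- `C f (a x) = C (C (B ∘ f) a) x`. -/
theorem IsExt.C_split (hS : S.IsExt) (f a x : α) :
    S.ap (S.ap S.Cp f) (S.ap a x)
      = S.ap (S.ap S.Cp (S.ap (S.ap S.Cp (S.comp S.B f)) a)) x := by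
  have := congrArg (fun z => S.ap (S.ap (S.ap z f) a) x) hS.B_comp_Cm
  simp only [hS.comp_ap, hS.hB] at this
  simp only [← hS.hC2] at this
  exact this

/-- An element of arity `1 → 1` is of the form `C⁺ B d`. -/
theorem IsExt.arity_eq (hS : S.IsExt) {a : α}
    (h : S.comp (S.ap (S.ap S.Cp S.B) a) S.B = S.comp (S.ap S.B a) S.B) :
    a = S.ap (S.ap S.Cp S.B) (S.ap a S.I) := by
  have h1 : S.ap (S.ap S.Cp (S.comp (S.ap S.B a) S.B)) S.I = a := by
    rw [hS.C_Bcomp, hS.hRho, hS.hLam, hS.comp_I]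
  rw [← h, hS.C_comp, ← hS.C_split] at h1
  exact h1.symm

/-- `C⁺ ∘ (C⁺ B t) = B (C⁺ B t) ∘ C⁺`. -/
theorem IsExt.C_slide (hS : S.IsExt) (t : α) :
    S.comp S.Cp (S.ap (S.ap S.Cp S.B) t)
      = S.comp (S.ap S.B (S.ap (S.ap S.Cp S.B) t)) S.Cp := by
  rw [← hS.C_Bcomp, hS.BC_B, ← hS.assoc, ← hS.C_comp, ← hS.B_Cm]

theorem twist_nat (hS : S.IsExt) {tp tm : α} (hBal : S.IsBalanced tp tm) {a : α}
    (h : S.hasArity a 1 1) : S.comp a tp = S.comp tp a := by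
  have ha : a = S.ap (S.ap S.Cp S.B) (S.ap a S.I) := by
    apply hS.arity_eq
    simpa only [hasArity, pow, hS.comp_I] using h
  have ht : tp = S.ap (S.ap S.Cp S.B) (S.ap tp S.I) := hS.arity_eq hBal.arP.symm
  have hd : ∀ d, S.ap (S.ap tp S.I) d = d := by
    intro d
    have := congrArg (fun z => S.ap z S.I) (hBal.natBulP d)
    simpa only [hS.hCp, hS.hI] using this
  have habs : ∀ k d, S.ap (S.ap S.Cp (S.comp tp k)) d = S.ap (S.ap S.Cp k) d := by
    intro k d
    rw [ht, hS.C_comp, ← hS.C_split, hd]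
  have hsl : S.comp S.Cp tp = S.comp (S.ap S.B tp) S.Cp := by
    have := hS.C_slide (S.ap tp S.I)
    rwa [← ht] at this
  generalize S.ap a S.I = d at ha
  subst ha
  rw [hS.C_comp, hBal.natBP, habs, ← hS.assoc S.Cp tp, hsl, hS.assoc, hS.C_Bcomp,
    ← hS.C_comp, hS.C_Cp_eq, hS.C_comp, ← hS.assoc, hS.CmCp, hS.I_comp]

end Paper.BCStruct

/-- The twist is natural on elements of arity `1 → 1`. -/
theorem stmt_13 {α : Type*} (S : Paper.BCStruct α) (hS : S.IsExt)
    {tp tm : α} (hBal : S.IsBalanced tp tm) {a : α} (h : S.hasArity a 1 1) :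
    S.comp a tp = S.comp tp a ∧ S.comp a tm = S.comp tm a := by
  refine ⟨Paper.BCStruct.twist_nat hS hBal h, ?_⟩
  refine Paper.BCStruct.twist_nat hS.swap (Paper.BCStruct.IsBalanced.swap hS hBal) (a := a) ?_
  unfold Paper.BCStruct.hasArity at h
  rw [hS.hC2] at h
  exact h
end

section
/- Every traced balanced extensional BC±I-algebra has a duality: the elements α := Tr (Tr ∘ (B Tr) ∘ (B C⁺) ∘ C⁺) and β := Tr (C⁺ ∘ (B C⁺) ∘ (B B) ∘ B) satisfy α• ∘ B = (B α) ∘ B², β• ∘ B³ = B β, α ∘ (B β) = B I, and (B α) ∘ β = B I, where a• := C⁺ I a. -/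
namespace Paper
/-- Monoid-level data extracted from a traced balanced algebra. -/
structure Core {M : Type*} [Monoid M] (σ : M →* M) (T : M → M) (m t c d θ φ b u : M) : Prop where
  cd : c * d = 1
  dc : d * c = 1
  cn : ∀ f, σ (σ f) * c = c * σ (σ f)
  yb : σ c * (c * σ c) = c * (σ c * c)
  mn : ∀ f, σ (σ f) * m = m * σ f
  hm : σ m * c = c * (σ c * m)
  hmd : σ m * d = d * (σ d * m)
  tn : ∀ f, σ f * t = t * σ (σ f)
  ht : c * t = σ t * (c * σ c)
  htd : d * t = σ t * (d * σ d)
  T1 : ∀ f a, T (σ f * a) = f * T a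
  T2 : ∀ a g, T (a * σ g) = T a * g
  TB : ∀ f, σ (T f) = t * (σ f * m)
  sup : ∀ f, T (d * (σ f * c)) = σ (T f)
  sup' : ∀ f, T (c * (σ f * d)) = σ (T f)
  ex : ∀ x, T (T (c * (x * d))) = T (T x)
  Tc : T c = θ
  Td : T d = φ
  tp : θ * φ = 1
  pt : φ * θ = 1
  nm : m * θ = θ * (c * (θ * (c * m)))
  mt : m * t = σ t * (b * (m * m))
  bn : ∀ f, f * b = b * σ f
  sb : σ b = b * c
  tu : T (t * c) = u
  uu : σ u * (b * (m * m)) = 1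


namespace Core
variable {M : Type*} [Monoid M] {σ : M →* M} {T : M → M} {m t c d θ φ b u : M}

theorem conj1 {x y c d : M} (h1 : c * d = 1) (h2 : d * c = 1) (h : x * c = c * y) :
    y * d = d * x := by
  calc y * d = d * (c * y) * d := by rw [← mul_assoc d c y, h2, one_mul]
    _ = d * x := by rw [← h, mul_assoc, mul_assoc, h1, mul_one]


theorem cd_ (h : Core σ T m t c d θ φ b u) (w : M) : c * (d * w) = w := by
  have e := congrArg (fun z => z * w) h.cd
  simpa only [map_mul, map_one, mul_assoc, one_mul] using e

theorem dc_ (h : Core σ T m t c d θ φ b u) (w : M) : d * (c * w) = w := by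
  have e := congrArg (fun z => z * w) h.dc
  simpa only [map_mul, map_one, mul_assoc, one_mul] using e

theorem scd_ (h : Core σ T m t c d θ φ b u) (w : M) : σ c * (σ d * w) = w := by
  have e := congrArg (fun z => σ z * w) h.cd
  simpa only [map_mul, map_one, mul_assoc, one_mul] using e

theorem sdc_ (h : Core σ T m t c d θ φ b u) (w : M) : σ d * (σ c * w) = w := by
  have e := congrArg (fun z => σ z * w) h.dc
  simpa only [map_mul, map_one, mul_assoc, one_mul] using e

theorem dn (h : Core σ T m t c d θ φ b u) (f : M) : σ (σ f) * d = d * σ (σ f) :=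
  conj1 h.cd h.dc (h.cn f)
theorem tn' (h : Core σ T m t c d θ φ b u) (f : M) : σ f * θ = θ * σ f := by
  rw [← h.Tc, ← h.T1, h.cn, h.T2]
theorem pn (h : Core σ T m t c d θ φ b u) (f : M) : σ f * φ = φ * σ f := by
  rw [← h.Td, ← h.T1, h.dn, h.T2]

theorem cn_ (h : Core σ T m t c d θ φ b u) (f w : M) : σ (σ f) * (c * w) = c * (σ (σ f) * w) := by
  have e := congrArg (fun z => z * w) (h.cn f)
  simpa only [map_mul, map_one, mul_assoc, one_mul] using e

theorem dn_ (h : Core σ T m t c d θ φ b u) (f w : M) : σ (σ f) * (d * w) = d * (σ (σ f) * w) := by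
  have e := congrArg (fun z => z * w) (h.dn f)
  simpa only [map_mul, map_one, mul_assoc, one_mul] using e

theorem scn_ (h : Core σ T m t c d θ φ b u) (f w : M) : σ (σ (σ f)) * (σ c * w) = σ c * (σ (σ (σ f)) * w) := by
  have e := congrArg (fun z => σ z * w) (h.cn f)
  simpa only [map_mul, map_one, mul_assoc, one_mul] using e

theorem tn_ (h : Core σ T m t c d θ φ b u) (f w : M) : σ f * (t * w) = t * (σ (σ f) * w) := by
  have e := congrArg (fun z => z * w) (h.tn f)
  simpa only [map_mul, map_one, mul_assoc, one_mul] using e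

theorem tw_ (h : Core σ T m t c d θ φ b u) (f w : M) : σ f * (θ * w) = θ * (σ f * w) := by
  have e := congrArg (fun z => z * w) (h.tn' f)
  simpa only [map_mul, map_one, mul_assoc, one_mul] using e

theorem pw_ (h : Core σ T m t c d θ φ b u) (f w : M) : σ f * (φ * w) = φ * (σ f * w) := by
  have e := congrArg (fun z => z * w) (h.pn f)
  simpa only [map_mul, map_one, mul_assoc, one_mul] using e

theorem mn_ (h : Core σ T m t c d θ φ b u) (f w : M) : σ (σ f) * (m * w) = m * (σ f * w) := by
  have e := congrArg (fun z => z * w) (h.mn f)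
  simpa only [map_mul, map_one, mul_assoc, one_mul] using e

theorem yb_ (h : Core σ T m t c d θ φ b u) (w : M) : σ c * (c * (σ c * w)) = c * (σ c * (c * w)) := by
  have e := congrArg (fun z => z * w) h.yb
  simpa only [map_mul, map_one, mul_assoc, one_mul] using e

theorem hm_ (h : Core σ T m t c d θ φ b u) (w : M) : σ m * (c * w) = c * (σ c * (m * w)) := by
  have e := congrArg (fun z => z * w) h.hm
  simpa only [map_mul, map_one, mul_assoc, one_mul] using e

theorem hmd_ (h : Core σ T m t c d θ φ b u) (w : M) : σ m * (d * w) = d * (σ d * (m * w)) := by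
  have e := congrArg (fun z => z * w) h.hmd
  simpa only [map_mul, map_one, mul_assoc, one_mul] using e

theorem shm_ (h : Core σ T m t c d θ φ b u) (w : M) : σ (σ m) * (σ c * w) = σ c * (σ (σ c) * (σ m * w)) := by
  have e := congrArg (fun z => σ z * w) h.hm
  simpa only [map_mul, map_one, mul_assoc, one_mul] using e

theorem shmd_ (h : Core σ T m t c d θ φ b u) (w : M) : σ (σ m) * (σ d * w) = σ d * (σ (σ d) * (σ m * w)) := by
  have e := congrArg (fun z => σ z * w) h.hmd
  simpa only [map_mul, map_one, mul_assoc, one_mul] using e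

theorem ht_ (h : Core σ T m t c d θ φ b u) (w : M) : c * (t * w) = σ t * (c * (σ c * w)) := by
  have e := congrArg (fun z => z * w) h.ht
  simpa only [map_mul, map_one, mul_assoc, one_mul] using e

theorem htd_ (h : Core σ T m t c d θ φ b u) (w : M) : d * (t * w) = σ t * (d * (σ d * w)) := by
  have e := congrArg (fun z => z * w) h.htd
  simpa only [map_mul, map_one, mul_assoc, one_mul] using e

theorem syb_ (h : Core σ T m t c d θ φ b u) (w : M) : σ (σ c) * (σ c * (σ (σ c) * w)) = σ c * (σ (σ c) * (σ c * w)) := by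
  have e := congrArg (fun z => σ z * w) h.yb
  simpa only [map_mul, map_one, mul_assoc, one_mul] using e

theorem mt_ (h : Core σ T m t c d θ φ b u) (w : M) : m * (t * w) = σ t * (b * (m * (m * w))) := by
  have e := congrArg (fun z => z * w) h.mt
  simpa only [map_mul, map_one, mul_assoc, one_mul] using e

theorem bn_ (h : Core σ T m t c d θ φ b u) (f w : M) : f * (b * w) = b * (σ f * w) := by
  have e := congrArg (fun z => z * w) (h.bn f)
  simpa only [map_mul, map_one, mul_assoc, one_mul] using e

theorem sb_ (h : Core σ T m t c d θ φ b u) (w : M) : σ b * w = b * (c * w) := by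
  have e := congrArg (fun z => z * w) h.sb
  simpa only [map_mul, map_one, mul_assoc, one_mul] using e

theorem tp_ (h : Core σ T m t c d θ φ b u) (w : M) : θ * (φ * w) = w := by
  have e := congrArg (fun z => z * w) h.tp
  simpa only [map_mul, map_one, mul_assoc, one_mul] using e

theorem pt_ (h : Core σ T m t c d θ φ b u) (w : M) : φ * (θ * w) = w := by
  have e := congrArg (fun z => z * w) h.pt
  simpa only [map_mul, map_one, mul_assoc, one_mul] using e

theorem stp_ (h : Core σ T m t c d θ φ b u) (w : M) : σ θ * (σ φ * w) = w := by
  have e := congrArg (fun z => σ z * w) h.tp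
  simpa only [map_mul, map_one, mul_assoc, one_mul] using e

theorem spt_ (h : Core σ T m t c d θ φ b u) (w : M) : σ φ * (σ θ * w) = w := by
  have e := congrArg (fun z => σ z * w) h.pt
  simpa only [map_mul, map_one, mul_assoc, one_mul] using e

theorem nm_ (h : Core σ T m t c d θ φ b u) (w : M) : m * (θ * w) = θ * (c * (θ * (c * (m * w)))) := by
  have e := congrArg (fun z => z * w) h.nm
  simpa only [map_mul, map_one, mul_assoc, one_mul] using e

theorem y1_ (h : Core σ T m t c d θ φ b u) (w : M) : σ c * (c * (σ d * w)) = d * (σ c * (c * w)) := by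
  have e := h.yb_ (σ d * w)
  rw [h.scd_] at e
  rw [← h.dc_ (σ c * (c * (σ d * w))), ← e]
theorem y2_ (h : Core σ T m t c d θ φ b u) (w : M) : c * (σ c * (d * w)) = σ d * (c * (σ c * w)) := by
  have e := h.yb_ (d * w)
  rw [h.cd_] at e
  have e2 := h.yb_ (d * w)
  rw [← h.sdc_ (c * (σ c * (d * w))), h.yb_, h.cd_]

theorem y3_ (h : Core σ T m t c d θ φ b u) (w : M) : d * (σ d * (c * w)) = σ c * (d * (σ d * w)) := by
  have e3 := h.y2_ (σ d * w)
  rw [h.scd_] at e3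
  rw [← e3, h.dc_]
theorem ybd_ (h : Core σ T m t c d θ φ b u) (w : M) : σ d * (d * (σ d * w)) = d * (σ d * (d * w)) := by
  have e : c * (σ c * (c * (σ d * (d * (σ d * w))))) = w := by
    rw [← h.yb_, h.scd_, h.cd_, h.scd_]
  rw [← congrArg (fun z => d * (σ d * (d * z))) e, h.dc_, h.sdc_, h.dc_]
theorem y4_ (h : Core σ T m t c d θ φ b u) (w : M) : c * (σ d * (d * w)) = σ d * (d * (σ c * w)) := by
  have e := h.ybd_ (σ c * w)
  rw [h.sdc_] at e
  rw [e, h.cd_]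
/-- twist slides through the braid -/
theorem s1 (h : Core σ T m t c d θ φ b u) : c * θ = σ θ * c := by
  have e : c * (θ * d) = σ θ := by
    rw [← h.Tc, ← h.sup, ← h.T2, ← h.T1]
    congr 1
    simpa only [mul_one] using h.y1_ 1
  rw [← e]; simp only [mul_assoc]; rw [h.dc, mul_one]
theorem s2 (h : Core σ T m t c d θ φ b u) : θ * c = c * σ θ := by
  have e : d * (θ * c) = σ θ := by
    rw [← h.Tc, ← h.sup', ← h.T2, ← h.T1]
    congr 1
    simpa only [mul_one] using (h.y2_ 1).symm
  rw [← e, h.cd_]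

theorem st (h : Core σ T m t c d θ φ b u) (w : M) : σ θ * (σ φ * w) = w := by
  have e := congrArg (fun z => σ z * w) (h.tp)
  simpa only [map_mul, map_one, mul_assoc, one_mul, mul_one] using e

theorem s3 (h : Core σ T m t c d θ φ b u) : c * φ = σ φ * c := by
  rw [← h.spt_ (c * φ), ← mul_assoc (σ θ), ← h.s1, mul_assoc, h.tp, mul_one]

theorem s4 (h : Core σ T m t c d θ φ b u) : φ * c = c * σ φ := by
  have e := h.s2
  have e2 : φ * (θ * c) * σ φ = φ * (c * σ θ) * σ φ := by rw [e]
  rw [h.pt_] at e2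
  have e3 : σ θ * σ φ = 1 := by rw [← map_mul, h.tp, map_one]
  rw [e2, mul_assoc, mul_assoc, e3, mul_one]
theorem s5 (h : Core σ T m t c d θ φ b u) : d * θ = σ θ * d := (conj1 h.cd h.dc h.s2).symm

theorem s1_ (h : Core σ T m t c d θ φ b u) (w : M) : c * (θ * w) = σ θ * (c * w) := by
  have e := congrArg (fun z => z * w) (h.s1)
  simpa only [map_mul, map_one, mul_assoc, one_mul, mul_one] using e

theorem s2_ (h : Core σ T m t c d θ φ b u) (w : M) : θ * (c * w) = c * (σ θ * w) := by
  have e := congrArg (fun z => z * w) (h.s2)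
  simpa only [map_mul, map_one, mul_assoc, one_mul, mul_one] using e

theorem ss2_ (h : Core σ T m t c d θ φ b u) (w : M) : σ θ * (σ c * w) = σ c * (σ (σ θ) * w) := by
  have e := congrArg (fun z => σ z * w) (h.s2)
  simpa only [map_mul, map_one, mul_assoc, one_mul, mul_one] using e

theorem ss1_ (h : Core σ T m t c d θ φ b u) (w : M) : σ c * (σ θ * w) = σ (σ θ) * (σ c * w) := by
  have e := congrArg (fun z => σ z * w) (h.s1)
  simpa only [map_mul, map_one, mul_assoc, one_mul, mul_one] using e

theorem s3_ (h : Core σ T m t c d θ φ b u) (w : M) : c * (φ * w) = σ φ * (c * w) := by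
  have e := congrArg (fun z => z * w) (h.s3)
  simpa only [map_mul, map_one, mul_assoc, one_mul, mul_one] using e

theorem s4_ (h : Core σ T m t c d θ φ b u) (w : M) : φ * (c * w) = c * (σ φ * w) := by
  have e := congrArg (fun z => z * w) (h.s4)
  simpa only [map_mul, map_one, mul_assoc, one_mul, mul_one] using e

theorem s5_ (h : Core σ T m t c d θ φ b u) (w : M) : d * (θ * w) = σ θ * (d * w) := by
  have e := congrArg (fun z => z * w) (h.s5)
  simpa only [map_mul, map_one, mul_assoc, one_mul, mul_one] using e

theorem slide (h : Core σ T m t c d θ φ b u) (A : M) : T (θ * A) = T (A * θ) := by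
  have e := h.ex (σ A * c)
  have e1 : c * (σ A * c * d) = c * σ A := by rw [mul_assoc (σ A), h.cd, mul_one]
  rw [e1, h.T2, h.T1, h.Tc] at e
  exact e
theorem slide' (h : Core σ T m t c d θ φ b u) (A : M) : T (φ * A) = T (A * φ) := by
  have e := h.slide (φ * (A * φ))
  rw [h.tp_, mul_assoc, mul_assoc, h.pt, mul_one] at e
  exact e.symm
/-- `c σm = σd m c` -/
theorem hm2_ (h : Core σ T m t c d θ φ b u) (w : M) : c * (σ m * w) = σ d * (m * (c * w)) := by
  have e := h.hmd_ (c * w)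
  rw [h.dc_] at e
  rw [e, h.cd_]
theorem hm3_ (h : Core σ T m t c d θ φ b u) (w : M) : m * (c * w) = σ c * (c * (σ m * w)) := by
  rw [h.hm2_, h.scd_]
/-- `d σt = t σd d` -/
theorem ht2_ (h : Core σ T m t c d θ φ b u) (w : M) : d * (σ t * w) = t * (σ d * (d * w)) := by
  have e := h.ht_ (σ d * (d * w))
  rw [h.scd_, h.cd_] at e
  rw [← e, h.dc_]
theorem ht3_ (h : Core σ T m t c d θ φ b u) (w : M) : c * (σ t * w) = t * (σ c * (c * w)) := by
  have e := h.htd_ (σ c * (c * w))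
  rw [h.sdc_, h.dc_] at e
  rw [← e, h.cd_]
/-- `σt c = c t σd` -/
theorem ht4_ (h : Core σ T m t c d θ φ b u) (w : M) : σ t * (c * w) = c * (t * (σ d * w)) := by
  rw [h.ht_, h.scd_]
theorem sht2_ (h : Core σ T m t c d θ φ b u) (w : M) : σ d * (σ (σ t) * w) = σ t * (σ (σ d) * (σ d * w)) := by
  have e := congrArg (fun z => σ z * w) (h.ht2_ 1)
  simpa only [map_mul, map_one, mul_assoc, one_mul, mul_one] using e
theorem sy1_ (h : Core σ T m t c d θ φ b u) (w : M) : σ (σ c) * (σ c * (σ (σ d) * w)) = σ d * (σ (σ c) * (σ c * w)) := by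
  have e := congrArg (fun z => σ z * w) (h.y1_ 1)
  simpa only [map_mul, map_one, mul_assoc, one_mul, mul_one] using e
theorem sy3_ (h : Core σ T m t c d θ φ b u) (w : M) : σ d * (σ (σ d) * (σ c * w)) = σ (σ c) * (σ d * (σ (σ d) * w)) := by
  have e := congrArg (fun z => σ z * w) (h.y3_ 1)
  simpa only [map_mul, map_one, mul_assoc, one_mul, mul_one] using e
theorem sy4_ (h : Core σ T m t c d θ φ b u) (w : M) : σ c * (σ (σ d) * (σ d * w)) = σ (σ d) * (σ d * (σ (σ c) * w)) := by
  have e := congrArg (fun z => σ z * w) (h.y4_ 1)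
  simpa only [map_mul, map_one, mul_assoc, one_mul, mul_one] using e
theorem ssdc_ (h : Core σ T m t c d θ φ b u) (w : M) : σ (σ d) * (σ (σ c) * w) = w := by
  have e := congrArg (fun z => σ (σ z) * w) h.dc
  simpa only [map_mul, map_one, mul_assoc, one_mul, mul_one] using e
theorem sscd_ (h : Core σ T m t c d θ φ b u) (w : M) : σ (σ c) * (σ (σ d) * w) = w := by
  have e := congrArg (fun z => σ (σ z) * w) h.cd
  simpa only [map_mul, map_one, mul_assoc, one_mul, mul_one] using e

/-- naturality of β -/
theorem betaNat (h : Core σ T m t c d θ φ b u) : c * σ (T (c * (σ c * (σ m * m)))) = σ d * T (c * (σ c * (σ m * m))) := by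
  have e : ∀ w, c * (σ c * (σ (σ c) * (σ (σ m) * (σ m * (d * w)))))
      = σ d * (σ (σ d) * (c * (σ c * (σ m * (m * w))))) := by
    intro w
    rw [h.hmd_, h.dn_, h.shmd_, h.dn_, ← h.sy3_, ← h.y3_, h.cd_, ← h.cn_]
  have e1 : T (c * (σ (c * (σ c * (σ m * m))) * d)) = d * (σ d * T (c * (σ c * (σ m * m)))) := by
    rw [← h.T1, ← h.T1]
    congr 1
    simpa only [map_mul, mul_assoc, mul_one] using e 1
  rw [← h.sup', e1, h.cd_]
/-- naturality of α -/
theorem alphaNat (h : Core σ T m t c d θ φ b u) : σ (T (t * (σ t * (σ c * c)))) * c = T (t * (σ t * (σ c * c))) * σ d := by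
  have e : ∀ w, d * (σ t * (σ (σ t) * (σ (σ c) * (σ c * (c * w)))))
      = t * (σ t * (σ c * (c * (σ (σ d) * (σ d * w))))) := by
    intro w
    rw [h.ht2_, ← h.dn_, h.sht2_, ← h.dn_, ← h.y1_, ← h.sy1_, h.ssdc_, h.cn_]
  have e1 : T (d * (σ (t * (σ t * (σ c * c))) * c)) = T (t * (σ t * (σ c * c))) * (σ d * d) := by
    rw [← mul_assoc (T _), ← h.T2, ← h.T2]
    congr 1
    simpa only [map_mul, mul_assoc, mul_one] using e 1
  rw [← h.sup, e1, mul_assoc, mul_assoc, h.dc, mul_one]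


theorem p2 (h : Core σ T m t c d θ φ b u) : t * (σ d * T (c * (σ c * (σ m * m)))) = θ * (c * (m * φ)) := by
  have e : ∀ w, σ t * (σ (σ d) * (c * (σ c * (σ m * (m * w)))))
      = c * (t * (σ d * (σ (σ d) * (σ c * (σ m * (m * w)))))) := by
    intro w
    rw [h.cn_, h.ht4_]
  have e2 : ∀ w, d * (σ d * (c * (m * w))) = σ c * (σ m * (d * w)) := by
    intro w
    rw [h.y3_, h.hmd_]
  have e3 : t * (σ (d * (σ d * (c * m))) * m) = σ (c * (m * φ)) := by
    rw [← h.TB, ← h.Td, ← h.T1, ← h.T1]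
    congr 2
    simpa only [mul_one] using e2 1
  have e4 : σ t * (σ (σ d) * (c * (σ c * (σ m * m)))) = c * σ (c * (m * φ)) := by
    rw [← e3]
    simpa only [map_mul, mul_assoc, mul_one] using e 1
  rw [← h.T1, ← h.T1, e4, h.T2, h.Tc]

theorem k2 (h : Core σ T m t c d θ φ b u) : T (t * (σ t * (σ c * c))) * σ (T (c * (σ c * (σ m * m))))
    = T (t * (σ (θ * (c * (m * φ))) * c)) := by
  rw [← h.T2]
  congr 1
  simp only [mul_assoc]
  rw [← h.cn, ← h.p2, ← h.betaNat]
  simp only [map_mul, mul_assoc]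

theorem p1 (h : Core σ T m t c d θ φ b u) : T (t * (σ t * (σ c * c))) * (σ d * m) = φ * (t * (c * θ)) := by
  have e : ∀ w, t * (σ t * (σ c * (c * (σ (σ d) * (σ m * w)))))
      = t * (σ d * (m * (σ t * (σ c * (c * w))))) := by
    intro w
    rw [← h.cn_, h.hm2_, h.sy4_, h.mn_, ← h.sht2_, h.mn_]
  have e3 : t * (σ (σ d) * (σ m)) = t * (σ (σ d) * σ m) := rfl
  have e4 : t * (σ d * m) = σ φ := by rw [← h.Td, h.TB]
  have e5 : t * (σ t * (σ c * c)) * σ (σ d) * σ m = σ φ * (σ t * (σ c * c)) := by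
    rw [← e4]
    simpa only [mul_assoc, mul_one] using e 1
  rw [← mul_assoc (T _), ← h.T2, ← h.T2, e5, h.T1, h.T1, h.T1, h.Tc]

theorem k1 (h : Core σ T m t c d θ φ b u) : σ (T (t * (σ t * (σ c * c)))) * T (c * (σ c * (σ m * m)))
    = T (c * (σ (φ * (t * (c * θ))) * m)) := by
  rw [← h.T1]
  congr 1
  rw [h.cn_, ← h.p1, ← mul_assoc (T _), ← h.alphaNat]
  simp only [map_mul, mul_assoc]

theorem k12 (h : Core σ T m t c d θ φ b u) : T (t * (σ (θ * (c * (m * φ))) * c)) = T (c * (σ (φ * (t * (c * θ))) * m)) := by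
  have e : t * (σ (θ * (c * (m * φ))) * c) = t * (σ θ * (σ c * (σ m * c))) * φ := by
    simp only [map_mul, mul_assoc]
    rw [← h.s3]
  have e2 : ∀ w, φ * (t * (σ θ * (σ c * (σ m * (c * w)))))
      = c * (σ φ * (σ t * (σ c * (σ θ * (m * w))))) := by
    intro w
    rw [h.hm_, h.ss2_, h.cn_, ← h.ss1_, ← h.ht3_, h.s4_]
  rw [e, ← h.slide']
  congr 1
  simpa only [map_mul, mul_assoc, mul_one] using e2 1

theorem sl (h : Core σ T m t c d θ φ b u) (A : M) : T (c * (m * (θ * A))) = φ * T (c * (σ (θ * A) * m)) := by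
  have e := h.ex (σ c * (c * (m * (σ A * c))))
  have e1 : c * (σ c * (c * (m * (σ A * c))) * d) = σ c * (σ m * (c * σ A)) := by
    simp only [mul_assoc]
    rw [h.cd, mul_one, ← h.yb_, ← h.hm_]
  have e2 : σ c * (c * (m * (σ A * c))) = σ c * (σ (σ A) * (σ c * (c * σ (c * m)))) := by
    have : ∀ w, σ c * (c * (m * (σ A * (c * w))))
      = σ c * (σ (σ A) * (σ c * (c * (σ c * (σ m * w))))) := by
      intro w
      rw [← h.mn_, h.hm3_, h.yb_, h.cn_]
    simpa only [map_mul, mul_assoc, mul_one] using this 1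
  rw [e1, e2, h.T1, h.T1, ← mul_assoc, h.T2, h.Tc, h.T1, h.T1, h.T1, h.T2, h.Tc] at e
  have e3 : c * (θ * (c * m)) = φ * (m * θ) := by
    rw [h.nm, h.pt_]
  rw [mul_assoc, e3] at e
  have e4 : c * (σ A * (φ * (m * θ))) = c * (σ A * (φ * m)) * θ := by simp only [mul_assoc]
  have e5 : θ * (c * (σ A * (φ * m))) = σ φ * (c * (σ (θ * A) * m)) := by
    rw [h.s2_, h.pw_, h.pw_, h.s3_, map_mul, mul_assoc]
  rw [e, e4, ← h.slide, e5, h.T1]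

theorem k1' (h : Core σ T m t c d θ φ b u) : T (c * (σ (φ * (t * (c * θ))) * m)) = 1 := by
  have e := h.sl (φ * (φ * (t * (c * θ))))
  rw [h.tp_] at e
  have e1 : c * (m * (φ * (t * (c * θ)))) = c * (m * (φ * (t * c))) * θ := by simp only [mul_assoc]
  have e2 : θ * (c * (m * (φ * (t * c)))) = σ φ * (d * (m * (t * c))) := by
    have : ∀ w, θ * (c * (m * w)) = σ φ * (d * (m * (θ * w))) := by
      intro w
      rw [h.nm_, h.s5_, h.spt_, h.dc_]
    rw [this, h.tp_]
  rw [e1, ← h.slide, e2, h.T1] at e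
  have e3 := congrArg (fun z => θ * z) e
  simp only [h.tp_] at e3
  rw [← e3]
  have e4 : ∀ w, d * (m * (t * (c * w))) = d * (σ t * (σ c * (c * (σ b * (σ m * (σ m * w)))))) := by
    intro w
    rw [h.mt_, h.hm3_, ← h.mn_, h.hm3_, ← h.bn_, ← h.bn_, h.sb_]
  have e5 : d * (m * (t * c)) = (d * (σ (t * c) * c)) * σ (b * (m * m)) := by
    simpa only [map_mul, mul_assoc, mul_one] using e4 1
  rw [e5, h.T2, h.sup, h.tu, h.uu]

theorem dual1 (h : Core σ T m t c d θ φ b u) : T (t * (σ t * (σ c * c))) * σ (T (c * (σ c * (σ m * m)))) = 1 := by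
  rw [h.k2, h.k12, h.k1']
theorem dual2 (h : Core σ T m t c d θ φ b u) : σ (T (t * (σ t * (σ c * c)))) * T (c * (σ c * (σ m * m))) = 1 := by
  rw [h.k1, h.k1']

end Core
end Paper

namespace Paper
/-- The axioms of an extensional BC±I-algebra in the language of the composition monoid. -/
structure Ax {M : Type*} [Monoid M] (σ : M →* M) (ap : M → M → M) (bul : M → M)
    (B C D : M) : Prop where
  apB : ∀ x, ap B x = σ x
  apM : ∀ a b x, ap (a * b) x = ap a (ap b x)
  ap1 : ∀ a, ap 1 a = a
  apS : ∀ a b, ap (σ a) b = a * b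
  hC : ∀ a b x, ap (ap (ap C a) b) x = ap (ap a x) b
  hD : ∀ a b x, ap (ap (ap D a) b) x = ap (ap a x) b
  bC : ∀ x, ap (ap C 1) x = bul x
  bD : ∀ x, ap (ap D 1) x = bul x
  rho : ap (ap C B) 1 = 1
  alpha : ap (ap C B) B * (B * B) = σ B * B
  cd : C * D = 1
  dc : D * C = 1
  cox2 : ap (ap C B) C * (B * B) = σ C * (B * B)
  cox2d : ap (ap D B) D * (B * B) = σ D * (B * B)
  yb : σ C * (C * σ C) = C * (σ C * C)
  hBC : σ B * C = C * (σ C * B)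
  hBD : σ B * D = D * (σ D * B)

namespace Ax
variable {M : Type*} [Monoid M] {σ : M →* M} {ap : M → M → M} {bul : M → M} {B C D : M}

theorem r1 (h : Ax σ ap bul B C D) (a : M) : B * ap C a = ap C (C * σ a) := by
  have e := congrArg (fun z => ap z a) h.hBC
  simpa only [h.apM, h.apS, h.apB] using e

theorem L2 (h : Ax σ ap bul B C D) (a b : M) : ap (ap C a) b = bul b * a := by
  have e := congrArg (fun z => ap (ap z b) a) (h.r1 1)
  simp only [h.apM, h.apS, h.apB, h.hC, h.bC, map_one, h.ap1] at e
  exact e.symm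

theorem L2d' (h : Ax σ ap bul B C D) (a b : M) : ap (ap D a) b = bul b * a := by
  have e := congrArg (fun z => ap (ap (ap z 1) b) a) h.hBD
  simp only [h.apM, h.apS, h.apB, h.hD, h.bD, map_one, h.ap1] at e
  exact e.symm

theorem symm (h : Ax σ ap bul B C D) : Ax σ ap bul B D C where
  apB := h.apB
  apM := h.apM
  ap1 := h.ap1
  apS := h.apS
  hC := h.hD
  hD := h.hC
  bC := h.bD
  bD := h.bC
  rho := by rw [h.L2d', ← h.L2, h.rho]
  alpha := by rw [h.L2d', ← h.L2, h.alpha]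
  cd := h.dc
  dc := h.cd
  cox2 := h.cox2d
  cox2d := h.cox2
  yb := by
    have cd := h.cd
    have dc := h.dc
    have scd : σ C * σ D = 1 := by rw [← map_mul, cd, map_one]
    have sdc : σ D * σ C = 1 := by rw [← map_mul, dc, map_one]
    have e : (σ C * (C * σ C)) * (σ D * (D * σ D)) = 1 := by
      rw [mul_assoc, mul_assoc, ← mul_assoc (σ C) (σ D), scd, one_mul, ← mul_assoc C D, cd, one_mul, scd]
    have e2 : (D * (σ D * D)) * (C * (σ C * C)) = 1 := by
      rw [mul_assoc, mul_assoc, ← mul_assoc D C, dc, one_mul, ← mul_assoc (σ D) (σ C), sdc, one_mul, dc]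
    rw [h.yb] at e
    calc σ D * (D * σ D) = (D * (σ D * D)) * (C * (σ C * C)) * (σ D * (D * σ D)) := by rw [e2, one_mul]
      _ = _ := by rw [mul_assoc _ _ (σ D * (D * σ D)), e, mul_one]
  hBC := h.hBD
  hBD := h.hBC

theorem L2d (h : Ax σ ap bul B C D) (a b : M) : ap (ap D a) b = bul b * a := h.symm.L2 a b
theorem cn (h : Ax σ ap bul B C D) (f : M) : σ (σ f) * C = C * σ (σ f) := by
  have e := congrArg (fun z => ap z f) h.cox2
  simpa only [h.apM, h.hC, h.apB, h.apS] using e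
theorem L7 (h : Ax σ ap bul B C D) (f a : M) : ap C (σ f * a) = σ f * ap C a := by
  have e := congrArg (fun z => ap z a) (h.cn f)
  simpa only [h.apM, h.apS] using e.symm
theorem L3 (h : Ax σ ap bul B C D) (f b : M) : f * bul b = bul b * σ f := by
  have e := congrArg (fun z => ap z b) (h.L7 f 1)
  simp only [h.apM, h.apS, h.bC, h.L2] at e
  simpa only [mul_one] using e.symm
theorem L6 (h : Ax σ ap bul B C D) : ap C C = B * ap C 1 := by
  rw [h.r1, map_one, mul_one]
theorem L4 (h : Ax σ ap bul B C D) (b : M) : σ (bul b) = bul b * C := by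
  rw [← h.L2, h.L6, h.apM, h.bC, h.apB]
theorem L5 (h : Ax σ ap bul B C D) (a : M) : ap C (ap D a) = a := by
  rw [← h.apM, h.cd, h.ap1]
theorem L5' (h : Ax σ ap bul B C D) (a : M) : ap D (ap C a) = a := h.symm.L5 a
theorem r2 (h : Ax σ ap bul B C D) (a : M) : ap D (B * ap C a) = C * σ a := by
  rw [h.r1, h.L5']
theorem L8 (h : Ax σ ap bul B C D) (a x : M) : ap C (a * x) = bul x * (B * ap C a) := by
  rw [← h.L2d, h.r2, h.apM, h.apS]
theorem L9 (h : Ax σ ap bul B C D) (x : M) : ap C x = bul x * (B * ap C 1) := by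
  rw [← h.L8, one_mul]
theorem L10 (h : Ax σ ap bul B C D) (a : M) : C * σ a = bul (ap C a) * (B * ap D B) := by
  rw [← h.r2, h.symm.L8]
theorem b1 (h : Ax σ ap bul B C D) : bul 1 * B = 1 := by
  rw [← h.L2, h.rho]
theorem L11 (h : Ax σ ap bul B C D) : σ (ap C 1) = C * ap C B := by
  have e := h.symm.L10 (ap C 1)
  rw [h.L5', ← mul_assoc, h.b1, one_mul] at e
  rw [← e, ← mul_assoc, h.cd, one_mul]
theorem L12 (h : Ax σ ap bul B C D) (a b : M) : bul (ap a b) = bul b * (bul a * B) := by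
  rw [← h.bC (ap a b), ← h.apM, ← h.apS, h.L11, h.apM, h.L2, h.L2]
theorem bB (h : Ax σ ap bul B C D) : bul B * (B * (B * B)) = σ B * B := by
  rw [← h.alpha, h.L2, mul_assoc]
theorem mn (h : Ax σ ap bul B C D) (f : M) : σ (σ f) * B = B * σ f := by
  have e := congrArg (fun z => ap z f) h.alpha
  simpa only [h.apM, h.hC, h.apB, h.apS] using e
theorem bS (h : Ax σ ap bul B C D) (x : M) : bul (σ x) = bul x * (bul B * B) := by
  rw [← h.apB, h.L12]
theorem bS2 (h : Ax σ ap bul B C D) (x : M) : bul (σ x) * (B * B) = B * (bul x * B) := by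
  rw [h.bS, ← mul_assoc B, h.L3]
  simp only [mul_assoc]
  rw [h.bB]
theorem bM (h : Ax σ ap bul B C D) (x y : M) :
    bul (x * y) * B = bul y * (B * (bul x * B)) := by
  rw [← h.apS x y, h.L12, mul_assoc, mul_assoc, h.bS2]
theorem bc (h : Ax σ ap bul B C D) (x f : M) : bul x * (B * σ f) = σ f * (bul x * B) := by
  rw [← h.mn, ← mul_assoc, ← h.L3, mul_assoc]
theorem cB (h : Ax σ ap bul B C D) : bul C * (B * (B * B)) = σ C * (B * B) := by
  rw [← h.cox2, h.L2, mul_assoc]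
theorem Cinj (h : Ax σ ap bul B C D) {x y : M} (e : ap C x = ap C y) : x = y := by
  rw [← h.L5' x, e, h.L5']

/-- arity `k → n` -/
def Ar (σ : M →* M) (bul : M → M) (B x : M) (k n : ℕ) : Prop :=
  bul x * (B * B ^ k) = σ x * B ^ n

theorem arM (h : Ax σ ap bul B C D) {x y : M} {k n l : ℕ} (hx : Ar σ bul B x k n)
    (hy : Ar σ bul B y n l) : Ar σ bul B (x * y) k l := by
  unfold Ar at *
  rw [← mul_assoc, h.bM, mul_assoc, mul_assoc, mul_assoc, hx, ← mul_assoc B, ← mul_assoc (bul y), h.bc,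
    mul_assoc, mul_assoc, hy, map_mul, mul_assoc]
theorem arS (h : Ax σ ap bul B C D) {x : M} {k n : ℕ} (hx : Ar σ bul B x k n) :
    Ar σ bul B (σ x) (k + 1) (n + 1) := by
  unfold Ar at *
  rw [pow_succ', ← mul_assoc B, ← mul_assoc, h.bS2, mul_assoc, mul_assoc, hx, ← mul_assoc, ← h.mn, pow_succ',
    mul_assoc]
theorem arW {x : M} {k n : ℕ} (hx : Ar σ bul B x k n) :
    Ar σ bul B x (k + 1) (n + 1) := by
  unfold Ar at *
  rw [pow_succ, pow_succ, ← mul_assoc (σ x), ← hx]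
  simp only [mul_assoc]
end Ax

/-- The trace axioms in the language of the composition monoid. -/
structure Tra {M : Type*} [Monoid M] (σ : M →* M) (ap : M → M → M) (bul : M → M)
    (B C D t θ φ : M) : Prop extends Ax σ ap bul B C D where
  lt : bul t * (B * B) = σ t * (B * B)
  rt : σ t * (bul B * (B * B)) = B * t
  Tc : ap t C = θ
  Td : ap t D = φ

namespace Tra
variable {M : Type*} [Monoid M] {σ : M →* M} {ap : M → M → M} {bul : M → M} {B C D t θ φ : M}

theorem symm (h : Tra σ ap bul B C D t θ φ) : Tra σ ap bul B D C t φ θ where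
  toAx := h.toAx.symm
  lt := h.lt
  rt := h.rt
  Tc := h.Td
  Td := h.Tc
theorem apb (h : Tra σ ap bul B C D t θ φ) (x y : M) : ap (bul x * B) y = y * x := by
  rw [← h.L2, h.hC, h.apB, h.apS]
theorem tn (h : Tra σ ap bul B C D t θ φ) (f : M) : σ f * t = t * σ (σ f) := by
  have e := congrArg (fun z => ap z f) h.lt
  simp only [← mul_assoc] at e
  rw [h.apM, h.apb] at e
  simpa only [h.apM, h.apB, h.apS] using e
theorem T1 (h : Tra σ ap bul B C D t θ φ) (f a : M) : ap t (σ f * a) = f * ap t a := by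
  have e := congrArg (fun z => ap z a) (h.tn f)
  simpa only [h.apM, h.apS] using e.symm
theorem TB (h : Tra σ ap bul B C D t θ φ) (f : M) : σ (ap t f) = t * (σ f * B) := by
  have e := congrArg (fun z => ap z f) h.rt
  simp only [← mul_assoc] at e
  rw [mul_assoc (σ t), h.apM, h.apM, h.apb] at e
  simpa only [h.apM, h.apB, h.apS] using e.symm
theorem T2 (h : Tra σ ap bul B C D t θ φ) (a g : M) : ap t (a * σ g) = ap t a * g := by
  have e := congrArg (fun z => ap z g) (h.TB a)
  simpa only [h.apM, h.apS, h.apB] using e.symm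
theorem bT (h : Tra σ ap bul B C D t θ φ) (w : M) :
    bul (ap t w) * B = t * (bul w * (B * B)) := by
  rw [h.L12, ← mul_assoc t, h.L3]
  simp only [mul_assoc]
  rw [h.lt]
theorem DBt (h : Tra σ ap bul B C D t θ φ) :
    ap C B * t = σ t * (bul B * (B * ap C B)) := by
  have e := congrArg (fun z => ap C z) h.lt
  rw [h.L7, h.L8 B B, ← mul_assoc (bul t), h.L8, ← h.L2 B t, ← h.apM, ← h.L11, h.apS] at e
  rw [← e, h.L9 B]
  simp only [mul_assoc]
theorem ht (h : Tra σ ap bul B C D t θ φ) : C * t = σ t * (C * σ C) := by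
  have e : C = bul (ap C 1) * (B * ap D B) := by
    rw [← h.L10, map_one, mul_one]
  have e2 : bul (B * ap C 1) * (B * ap D B) = bul (ap C 1) * (B * (bul B * (B * ap D B))) := by
    rw [← mul_assoc, h.bM]; simp only [mul_assoc]
  rw [h.L10, h.L6, e2]
  conv_lhs => rw [e]
  rw [mul_assoc, mul_assoc, h.symm.DBt, ← mul_assoc B, ← mul_assoc (bul _), h.bc]
  simp only [mul_assoc]
theorem sup' (h : Tra σ ap bul B C D t θ φ) (f : M) : ap t (D * (σ f * C)) = σ (ap t f) := by
  apply h.Cinj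
  have e1 : bul D * (B * (B * ap C 1)) = ap C 1 := by
    rw [← h.L6, ← h.L8, h.cd]
  have e2 : bul (σ f) * (B * ap C 1) = σ f * ap C 1 := by
    rw [← h.L9, ← h.L7, mul_one]
  have e3 : bul (D * (σ f * C)) * (B * (B * ap C 1)) = σ f * (B * ap C 1) := by
    rw [← mul_assoc, h.bM, ← mul_assoc (bul (σ f * C)), h.bM]
    simp only [mul_assoc]
    rw [e1, e2, ← mul_assoc B, ← mul_assoc (bul C), h.bc, mul_assoc, mul_assoc, ← h.L9, h.L6]
  rw [h.L9, ← mul_assoc, h.bT]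
  simp only [mul_assoc]
  rw [e3, ← mul_one (σ (ap t f)), h.L7, h.TB]
  simp only [mul_assoc]
theorem mt (h : Tra σ ap bul B C D t θ φ) : B * t = σ t * (bul B * (B * B)) := h.rt.symm
theorem hm2 (h : Tra σ ap bul B C D t θ φ) : C * σ B = σ D * (B * C) := by
  have e : C * (σ B * D) * C = C * (D * (σ D * B)) * C := by rw [h.hBD]
  rw [← mul_assoc C D, h.cd, one_mul, mul_assoc, mul_assoc, h.dc, mul_one, mul_assoc] at e
  exact e
theorem tu (h : Tra σ ap bul B C D t θ φ) (pt : φ * θ = 1) : ap t (t * C) = bul 1 := by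
  have e1 : ap t (t * C) * B = 1 := by
    have e : t * C * σ B = σ φ * C := by
      rw [mul_assoc, h.hm2, ← h.Td, h.TB]; simp only [mul_assoc]
    rw [← h.T2, e, h.T1, h.Tc, pt]
  have e2 : bul (ap t (t * C)) * B = σ (ap t (t * C)) * B := by
    rw [h.bT, ← mul_assoc (bul _), h.bM, h.TB]
    simp only [mul_assoc]
    rw [h.lt, ← mul_assoc B, ← mul_assoc (bul C), h.bc]
    simp only [mul_assoc]
    rw [h.cB, map_mul]
    simp only [mul_assoc]
  generalize hp : ap t (t * C) = p at *
  have e3 : bul (ap p 1) = p := by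
    rw [h.L12, e2, ← mul_assoc, ← h.L3, mul_assoc, h.b1, mul_one]
  have e4 : ap p 1 = 1 := by
    have := h.apb (ap p 1) 1
    rw [e3, e1, h.ap1, one_mul] at this
    exact this.symm
  rw [← e3, e4]
theorem uu (h : Tra σ ap bul B C D t θ φ) : σ (bul 1) * (bul B * (B * B)) = 1 := by
  have e : bul (ap (ap C B) 1) * B = 1 := by rw [h.rho, h.b1]
  rw [h.L12, h.L12] at e
  rw [h.L4, mul_assoc, ← mul_assoc C, h.L3, mul_assoc, ← h.cB]
  simpa only [mul_assoc] using e
theorem arT (h : Tra σ ap bul B C D t θ φ) {w : M} {k n : ℕ}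
    (hw : Ax.Ar σ bul B w (k + 1) (n + 1)) : Ax.Ar σ bul B (ap t w) k n := by
  unfold Ax.Ar at *
  rw [← mul_assoc, h.bT, h.TB]
  rw [pow_succ', pow_succ'] at hw
  simp only [mul_assoc]
  rw [hw]

theorem arAl (h : Tra σ ap bul B C D t θ φ) :
    bul (ap t (t * (σ t * (σ C * C)))) * B = σ (ap t (t * (σ t * (σ C * C)))) * (B * (B * 1)) := by
  have ac : Ax.Ar σ bul B C 2 2 := by
    unfold Ax.Ar; rw [pow_two, h.cB]
  have at' : Ax.Ar σ bul B t 1 2 := by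
    unfold Ax.Ar; rw [pow_two, pow_one, h.lt]
  have := h.arT (h.arM at' (h.arM (h.arS at') (h.arM (h.arS ac) (Ax.arW ac))))
  unfold Ax.Ar at this
  simpa only [pow_zero, mul_one, pow_two] using this
theorem arBe (h : Tra σ ap bul B C D t θ φ) :
    bul (ap t (C * (σ C * (σ B * B)))) * (B * (B * (B * 1))) = σ (ap t (C * (σ C * (σ B * B)))) := by
  have ac : Ax.Ar σ bul B C 2 2 := by
    unfold Ax.Ar; rw [pow_two, h.cB]
  have am : Ax.Ar σ bul B B 2 1 := by
    unfold Ax.Ar; rw [pow_two, pow_one, h.bB]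
  have := h.arT (h.arM (Ax.arW ac) (h.arM (h.arS ac) (h.arM (h.arS am) am)))
  unfold Ax.Ar at this
  simpa only [pow_zero, mul_one, pow_two] using this

theorem core (h : Tra σ ap bul B C D t θ φ) (tp : θ * φ = 1) (pt : φ * θ = 1)
    (nm : B * θ = θ * (C * (θ * (C * B))))
    (ex : ∀ x, ap t (ap t (C * (x * D))) = ap t (ap t x)) :
    Core σ (ap t) B t C D θ φ (bul B) (bul 1) where
  cd := h.cd
  dc := h.dc
  cn := h.cn
  yb := h.yb
  mn := h.mn
  hm := h.hBC
  hmd := h.hBD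
  tn := h.tn
  ht := h.ht
  htd := h.symm.ht
  T1 := h.T1
  T2 := h.T2
  TB := h.TB
  sup := h.sup'
  sup' := h.symm.sup'
  ex := ex
  Tc := h.Tc
  Td := h.Td
  tp := tp
  pt := pt
  nm := nm
  mt := h.mt
  bn := fun f => h.L3 f B
  sb := h.L4 B
  tu := h.tu pt
  uu := h.uu
end Tra

namespace BCStruct
variable {α : Type*}
theorem raw_nat {S : BCStruct α} (h : S.IsExt) (a : α) :
    S.comp (S.ap S.B (S.ap S.B a)) S.B = S.comp S.B (S.ap S.B a) := by
  have e := congrArg (fun z => S.ap z a) h.hAlpha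
  simpa only [comp, h.hB, h.hCp] using e
theorem raw_hom {S : BCStruct α} (h : S.IsExt) (a b : α) :
    S.ap S.B (S.comp a b) = S.comp (S.ap S.B a) (S.ap S.B b) := by
  have e := congrArg (fun z => S.ap z b) (raw_nat h a)
  simp only [comp, h.hB] at e
  simpa only [comp] using e.symm

/-- The composition monoid. -/
@[reducible] def mon {S : BCStruct α} (h : S.IsExt) : Monoid α where
  mul := S.comp
  one := S.I
  mul_assoc a b c := by
    change S.comp (S.comp a b) c = S.comp a (S.comp b c)
    have e := congrArg (fun z => S.ap z c) (raw_hom h a b)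
    simpa only [comp, h.hB] using e
  one_mul a := by
    change S.comp S.I a = a
    simp only [comp, h.hLam, h.hI]
  mul_one a := by
    change S.comp a S.I = a
    have e := congrArg (fun z => S.ap z a) h.hRho
    simpa only [comp, h.hLam, h.hCp, h.hI] using e
end BCStruct
end Paper

/-- Every traced balanced extensional BC±I-algebra has a duality given by
`α := Tr (Tr ∘ (B Tr) ∘ (B C⁺) ∘ C⁺)` and `β := Tr (C⁺ ∘ (B C⁺) ∘ (B B) ∘ B)`. -/
theorem stmt_15 {α : Type*} (S : Paper.BCStruct α) (hS : S.IsExt)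
    {tp tm Tr : α} (hBal : S.IsBalanced tp tm) (hTr : S.IsTrace tp tm Tr) :
    S.IsDuality
      (S.ap Tr (S.comp Tr (S.comp (S.ap S.B Tr) (S.comp (S.ap S.B S.Cp) S.Cp))))
      (S.ap Tr (S.comp S.Cp (S.comp (S.ap S.B S.Cp) (S.comp (S.ap S.B S.B) S.B)))) := by
  letI : Monoid α := Paper.BCStruct.mon hS
  let σ : α →* α :=
    { toFun := S.ap S.B
      map_one' := hS.hLam
      map_mul' := Paper.BCStruct.raw_hom hS }
  have hBI : S.ap S.B (S.ap S.B S.I) = S.I := by rw [hS.hLam, hS.hLam]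
  have ax : Paper.Ax σ S.ap S.bul S.B S.Cp S.Cm :=
    { apB := fun _ => rfl
      apM := hS.hB
      ap1 := hS.hI
      apS := fun _ _ => rfl
      hC := hS.hCp
      hD := hS.hCm
      bC := fun _ => rfl
      bD := fun x => (hS.hC2 S.I x).symm
      rho := hS.hRho.trans hS.hLam
      alpha := hS.hAlpha
      cd := hS.hCox1p.trans hBI
      dc := hS.hCox1m.trans hBI
      cox2 := hS.hCox2p
      cox2d := by rw [← hS.hC2]; exact hS.hCox2m
      yb := hS.hCox3p
      hBC := hS.hBCp
      hBD := hS.hBCm }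
  have tr : Paper.Tra σ S.ap S.bul S.B S.Cp S.Cm Tr tp tm :=
    { toAx := ax
      lt := by
        have e : S.ap (S.ap S.Cp S.B) Tr * S.B = σ Tr * (S.B * (S.B * 1)) := hTr.leftT
        rw [ax.L2, mul_one, mul_assoc] at e
        exact e
      rt := by
        have e : σ Tr * (S.ap (S.ap S.Cp S.B) S.B * S.B) = S.B * Tr := hTr.rightT
        rw [ax.L2, mul_assoc] at e
        exact e
      Tc := hTr.yankP
      Td := hTr.yankM }
  have core := tr.core (hBal.invPM.trans hS.hLam) (hBal.invMP.trans hS.hLam) hBal.natBP (by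
    intro x
    have e : Tr * Tr * S.ap (S.ap S.Cp S.B) S.Cm * σ S.Cp = Tr * Tr := hTr.exch
    have e2 := congrArg (fun z => S.ap z x) e
    simp only [ax.apM, ax.apS, ax.hC, ax.apB, mul_assoc] at e2
    exact e2)
  exact
    { arAl := tr.arAl
      arBe := tr.arBe
      d1 := core.dual1.trans hS.hLam.symm
      d2 := core.dual2.trans hS.hLam.symm }
end

section
/- A balanced extensional BC±I-algebra is traced if and only if it is ribbon: it admits an element Tr satisfying the Left Tightening, Right Tightening, Yanking, and Exchange axioms if and only if it admits elements α, β satisfying α• ∘ B = (B α) ∘ B², β• ∘ B³ = B β, α ∘ (B β) = B I, (B α) ∘ β = B I, α ∘ θ⁺ = α ∘ (B θ⁺), and α ∘ θ⁻ = α ∘ (B θ⁻), where a• := C⁺ I a. -/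
/-
Outline of the argument.

An extensional algebra is a monoid under composition, and the map sending x to the element B x is
a monoid endomorphism, written `sh` and called the shift. Right multiplication by x is the element
`R x`. With these conventions an element f has arity m to n precisely when the equation `Ar f m n`
holds; evaluating that equation at an arbitrary x shows that f intertwines iterated shifts, which
is lemma `arel`, and lemma `nat` says that a strand may be pulled across f using either braiding.
The lemma `ext1` recovers an element of arity one to one from its composite with B.

From a duality to a trace. Any element of arity two to zero absorbs a full twist of its two legs
(`N_beta`); this rests on the formula for moving a twist through two copies of B. Consequently the
ribbon condition identifies the two candidate ways of crossing the legs of the unit, which is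
`kap`. The trace of a is then the counit, followed by the shifted a, followed by the crossed unit.
Left tightening is an arity computation; right tightening, yanking and exchange are diagrammatic.

From a trace to a duality. Write T a for the result of applying the trace combinator to a. The
element `eta` recovers T a by plugging a into it, and `T_slide` says that a traced diagram can be
shifted by conjugating its body with a crossing. The unit is obtained by tracing the body `Y`, and
the counit `mkAl` is built out of two copies of `eta` with a correcting crossing and inverse twist.
Both zigzag equations are checked after composing with B, where everything turns into a nested
trace of a word in crossings and twists that can be evaluated by tightening and yanking. Tracing
the unit itself in two ways, once for each sign, gives the compatibility with twists; the exchange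
axiom plays no role in this direction.

The word computations are carried out with an extra variable z standing for an arbitrary tail, so
that each defining relation can be used as a plain rewrite rule anywhere inside a word.
-/

namespace BCAux

/-- Monoid form of an extensional BC±I-algebra; `c true`, `c false` are the two braidings. -/
class BCM (M : Type*) extends Monoid M where
  ap : M → M → M
  B : M
  c : Bool → M
  mul_def : ∀ a b : M, a * b = ap (ap B a) b
  ap_mul : ∀ a b x : M, ap (a * b) x = ap a (ap b x)
  one_ap : ∀ a : M, ap 1 a = a
  hC : ∀ s a b x, ap (ap (ap (c s) a) b) x = ap (ap a x) b
  hC2 : ∀ s t a b, ap (ap (c s) a) b = ap (ap (c t) a) b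
  sh_one : ap B (1 : M) = 1
  rho : ∀ s, ap (ap (c s) B) 1 = 1
  alpha : ap (ap (c true) B) B * (B * B) = ap B B * B
  cc : ∀ s, c s * c (!s) = 1
  cox2 : ∀ s, ap (ap (c true) B) (c s) * (B * B) = ap B (c s) * (B * B)
  cox3 : ∀ s, ap B (c s) * (c s * ap B (c s)) = c s * (ap B (c s) * c s)
  hBC : ∀ s, ap B B * c s = c s * (ap B (c s) * B)

open BCM

section L1
variable {M : Type*} [BCM M]

/-- `a•` -/
def bul (x : M) : M := ap (ap (c true) 1) x

theorem bul_eq (s : Bool) (x : M) : bul x = ap (ap (c s) 1) x := hC2 _ _ _ _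

theorem bul_ap (x y : M) : ap (bul x) y = ap y x := by
  rw [bul, hC, one_ap]

theorem cBx_ap (s : Bool) (x y : M) : ap (ap (ap (c s) B) x) y = y * x := by
  rw [hC, mul_def]

theorem shmul (a b : M) : ap B (a * b) = ap B a * ap B b := by
  have h := congrArg (fun z => ap (ap z a) b) (alpha (M := M))
  simp only [ap_mul] at h
  rw [cBx_ap, ap_mul, ← mul_def, ← mul_def, ap_mul] at h
  rw [mul_def a b]; exact h.symm

/-- The shift. -/
def sh : M →* M where
  toFun a := ap B a
  map_one' := sh_one
  map_mul' := shmul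

theorem sh_def (a : M) : sh a = ap B a := rfl
theorem sh_ap (a b : M) : ap (sh a) b = a * b := (mul_def a b).symm

theorem ap_one_B (a : M) : ap (sh a) 1 = a := by rw [sh_ap, mul_one]

theorem sh_inj {a b : M} (h : sh a = sh b) : a = b := by
  rw [← ap_one_B a, h, ap_one_B]

theorem c_c (s : Bool) (a : M) : ap (c (!s)) (ap (c s) a) = a := by
  rw [← ap_mul]
  have := cc (M := M) (!s)
  rw [Bool.not_not] at this
  rw [this, one_ap]

theorem c_inj (s : Bool) {a b : M} (h : ap (c s) a = ap (c s) b) : a = b := by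
  rw [← c_c s a, h, c_c]

theorem cc' (s : Bool) : c (!s) * c s = (1 : M) := by
  have := cc (M := M) (!s)
  rwa [Bool.not_not] at this

theorem BC1 (s : Bool) (a : M) : B * ap (c s) a = ap (c s) (c s * sh a) := by
  have h := congrArg (fun z => ap z a) (hBC (M := M) s)
  simp only [ap_mul, ← mul_def] at h
  exact h

theorem l1 (s : Bool) (a b y : M) : ap (ap (c s) a) b * y = ap (ap (c s) (a * y)) b := by
  have h := congrArg (fun z => ap (ap z b) y) (BC1 s a)
  simp only [ap_mul, hC, sh_ap] at h
  rw [← h, ← mul_def]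

theorem l2 (s : Bool) (b y : M) : bul b * y = ap (ap (c s) y) b := by
  rw [bul_eq s, l1, one_mul]

theorem arc (s : Bool) (x : M) : sh (sh x) * c s = c s * sh (sh x) := by
  have h := congrArg (fun z => ap z x) (cox2 (M := M) s)
  simp only [ap_mul, cBx_ap] at h
  rwa [← mul_def] at h

theorem sh_c1 (s : Bool) (x : M) : ap (c s) (sh x) = sh x * ap (c s) 1 := by
  have h := congrArg (fun z => ap z 1) (arc s x)
  simp only [ap_mul, sh_ap, mul_one] at h
  exact h.symm

theorem bul_comm (x a : M) : x * bul a = bul a * sh x := by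
  rw [l2 true, sh_c1, ap_mul, sh_ap]; rfl

theorem bul_c (s : Bool) (a : M) : bul a * c s = sh (bul a) := by
  have h := congrArg (fun z => ap z a) (BC1 s (1 : M))
  simp only [ap_mul, map_one, mul_one] at h
  rw [l2 s, ← h, bul_eq s, sh_def]

theorem bul_c' (s : Bool) (a : M) : sh (bul a) * c s = bul a := by
  rw [← bul_c (!s), mul_assoc, cc', mul_one]

/-- Right multiplication. -/
def R (x : M) : M := bul x * B

theorem cB (s : Bool) (x : M) : ap (ap (c s) B) x = R x := (l2 s x B).symm

theorem R_ap (x y : M) : ap (R x) y = y * x := by rw [← cB true, cBx_ap]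

theorem B_c (s : Bool) : B * c s = sh (c s) * c s * sh (B : M) := by
  have h := congrArg (fun z => sh (c s) * c s * z * c s) (hBC (M := M) (!s))
  simp only [← sh_def, mul_assoc, cc', mul_one] at h
  rw [← mul_assoc (c s) (c (!s)), cc, one_mul, ← mul_assoc (sh (c s)) (sh (c (!s))), ← map_mul, cc, map_one,
    one_mul] at h
  rw [← h, mul_assoc]

theorem c1_mul (s : Bool) (f : M) : ap (c s) 1 * f = ap (c s) (R f) := by
  have h := congrArg (fun z => ap (ap z 1) f) (B_c (M := M) s)
  simp only [ap_mul, sh_ap, mul_one, cB] at h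
  rw [← h, ← mul_def]

theorem bul_ap' (a b : M) : bul (ap a b) = bul b * (bul a * B) := by
  have h := congrArg (fun z => ap z b) (c1_mul true a)
  simp only [ap_mul] at h
  show bul (ap a b) = bul b * R a
  rw [l2 true]; exact h

theorem R_c (s : Bool) (y a : M) : R y * ap (c s) a = ap (c s) (a * y) := by
  rw [R, mul_assoc, BC1, l2 (!s), c_c, ap_mul, sh_ap]

theorem RB : R B * (B * B) = sh B * (B : M) := by
  have := alpha (M := M)
  rwa [cB] at this

theorem Rc (s : Bool) : R (c s) * (B * B) = sh (c s) * (B * (B : M)) := by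
  have := cox2 (M := M) s
  rwa [cB] at this

theorem B_sh (y : M) : B * sh y = sh (sh y) * B := by
  have h := congrArg (fun z => ap z y) (RB (M := M))
  simp only [ap_mul, R_ap] at h
  rw [← sh_def, ← sh_def, sh_ap] at h
  exact h.symm

theorem R_mul (a b : M) : R (a * b) = R b * R a := by
  have h : R (a * b) = bul b * bul a * (R B * (B * B)) := by
    rw [R, mul_def a b, bul_ap', bul_ap']; simp only [R, mul_assoc]
  rw [h, RB, R, R]
  calc bul b * bul a * (sh B * B) = bul b * (bul a * sh B) * B := by simp only [mul_assoc]
    _ = _ := by rw [← bul_comm]; simp only [mul_assoc]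

theorem R_one : R (1 : M) = 1 := by rw [← cB true, rho]

theorem RL (x y : M) : R x * sh y = sh y * R x := by
  rw [R, mul_assoc, B_sh, ← mul_assoc, ← bul_comm, mul_assoc]

theorem c_eq (s : Bool) (f : M) : ap (c s) f = R f * ap (c s) 1 := by
  rw [R_c, one_mul]

theorem R_sh (x : M) : R (sh x) * B = B * R x := by
  have h : R (sh x) * B = bul x * (R B * (B * B)) := by
    rw [R, sh_def, bul_ap']; simp only [R, mul_assoc]
  rw [h, RB, ← mul_assoc, ← bul_comm, R, mul_assoc]

theorem R_bul (f : M) : R (bul f) = sh (bul f) * B := by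
  have h : R (bul f) = bul f * (bul 1 * (R (c true) * (B * B))) := by
    rw [R, show bul (bul f) = bul (ap (ap (c true) 1) f) from rfl, bul_ap', bul_ap']; simp only [R, mul_assoc]
  rw [h, Rc, ← mul_assoc (bul 1), ← bul_comm, ← bul_c true]
  have := R_one (M := M)
  rw [R] at this
  simp only [mul_assoc]
  rw [← mul_assoc (bul 1), this, one_mul]

/-- Arity `m → n`. -/
def Ar (f : M) (m n : ℕ) : Prop := R f * B ^ m = sh f * B ^ n

theorem Ar.mul {f g : M} {m n p : ℕ} (hf : Ar f m n) (hg : Ar g n p) : Ar (f * g) m p := by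
  unfold Ar at *
  rw [R_mul, mul_assoc, hf, ← mul_assoc, RL, mul_assoc, hg, map_mul, mul_assoc]

theorem Ar.sh {f : M} {m n : ℕ} (hf : Ar f m n) : Ar (sh f) (m + 1) (n + 1) := by
  unfold Ar at *
  rw [pow_succ', pow_succ', ← mul_assoc, R_sh, mul_assoc, hf, ← mul_assoc, B_sh, mul_assoc]

theorem Ar.succ {f : M} {m n : ℕ} (hf : Ar f m n) : Ar f (m + 1) (n + 1) := by
  unfold Ar at *
  rw [pow_succ, pow_succ, ← mul_assoc, hf, mul_assoc]

theorem Ar_bul (f : M) : Ar (bul f) 0 1 := by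
  unfold Ar; simp [R_bul]

theorem Ar_B : Ar (B : M) 2 1 := by
  unfold Ar; simp [pow_two, RB]

theorem Ar_c (s : Bool) : Ar (c s : M) 2 2 := by
  unfold Ar; simp [pow_two, Rc]

theorem Ar_one (m : ℕ) : Ar (1 : M) m m := by
  unfold Ar; simp [R_one]

/-- one strand moved to the right past `m` strands -/
def d (s : Bool) : ℕ → M
  | 0 => 1
  | m + 1 => c s * sh (d s m)

theorem R_d (s : Bool) (m : ℕ) : R (d s m) * ap (c s) 1 = B ^ m * ap (c s) (1 : M) := by
  induction m with
  | zero => simp [d, R_one]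
  | succ m ih =>
    have h : R (c s) * ap (c s) 1 = B * ap (c s) (1 : M) := by
      rw [R_c, one_mul, BC1, map_one, mul_one]
    rw [d, R_mul, mul_assoc, h, ← mul_assoc, R_sh, mul_assoc, ih, pow_succ', mul_assoc]

theorem nat {f : M} {m n : ℕ} (s : Bool) (hf : Ar f m n) : d s m * f = sh f * d s n := by
  apply c_inj s
  rw [c_eq, R_mul, mul_assoc, R_d, ← mul_assoc, hf, mul_assoc, ← R_d]
  rw [c_eq s (sh f * _), R_mul, mul_assoc, ← c_eq s (sh f), sh_c1, ← mul_assoc, ← mul_assoc, RL]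

theorem ext1 {f g : M} (hf : Ar f 1 1) (hg : Ar g 1 1) (h : f * B = g * B) : f = g := by
  have key : ∀ f : M, Ar f 1 1 → f = bul (ap f 1) * B := by
    intro f hf
    have h1 := congrArg (fun z => bul 1 * z) hf
    simp only [pow_one] at h1
    rw [← mul_assoc (bul 1) (sh f), ← bul_comm, mul_assoc f] at h1
    have := R_one (M := M)
    rw [R] at this
    rw [this, mul_one] at h1
    calc f = bul 1 * (R f * B) := h1.symm
      _ = _ := by rw [bul_ap', R]; simp only [mul_assoc]
  rw [key f hf, key g hg] at h ⊢
  have h2 := congrArg (fun z => ap z 1) h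
  have hB : ap B (1 : M) = 1 := sh_one
  simp only [ap_mul, hB, bul_ap, one_ap] at h2
  rw [h2]

end L1
section L2
variable {M : Type*} [BCM M]

theorem arel {f : M} {m n : ℕ} (hf : Ar f m n) (x : M) :
    (sh^[m] x) * f = f * (sh^[n] x) := by
  have key : ∀ (k : ℕ) (x : M), ap (B ^ k) x = sh^[k] x := by
    intro k
    induction k with
    | zero => intro x; simp [one_ap]
    | succ k ih => intro x; rw [pow_succ, ap_mul, ih]; rfl
  have h := congrArg (fun z => ap z x) hf
  simp only [ap_mul, R_ap, sh_ap, key] at h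
  exact h

theorem shB_c (s : Bool) : sh B * c s = c s * (sh (c s) * (B : M)) := hBC s

theorem braid (s : Bool) : sh (c s) * (c s * sh (c s)) = c s * (sh (c s) * (c s : M)) := cox3 s

theorem shcc (s : Bool) : sh (c s) * sh (c (!s)) = (1 : M) := by
  rw [← map_mul, cc, map_one]
theorem shcc' (s : Bool) : sh (c (!s)) * sh (c s) = (1 : M) := by
  rw [← map_mul, cc', map_one]

theorem inv_swap {a a' b b' x : M} (h1 : a' * a = 1) (h2 : b * b' = 1) (h : a * x = x * b) :
    x * b' = a' * x := by
  calc x * b' = a' * a * (x * b') := by rw [h1, one_mul]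
    _ = a' * (a * x) * b' := by simp only [mul_assoc]
    _ = a' * x * (b * b') := by rw [h]; simp only [mul_assoc]
    _ = a' * x := by rw [h2, mul_one]

theorem braid1 (s : Bool) :
    sh (c (!s)) * (c s * sh (c s)) = c s * (sh (c s) * (c (!s) : M)) := by
  have h := inv_swap (M := M) (a := sh (c s)) (b := c s) (x := c s * sh (c s)) (shcc' s) (cc s)
    (by rw [braid, mul_assoc])
  rw [← h, mul_assoc]

theorem braid2 (s : Bool) :
    sh (c s) * (c s * sh (c (!s))) = c (!s) * (sh (c s) * (c s : M)) := by
  have h := inv_swap (M := M) (a := c s) (b := sh (c s)) (x := sh (c s) * c s) (cc' s) (shcc s)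
    (by rw [mul_assoc, braid])
  rw [← h, mul_assoc]

end L2

/-- twists -/
class TW (M : Type*) extends BCM M where
  t : Bool → M
  Ar_t : ∀ s, Ar (t s) 1 1
  tt : ∀ s, t s * t (!s) = 1
  bul_t : ∀ s a, bul a * t s = bul a
  Bt : ∀ s, B * t s = t s * (c s * (t s * (c s * B)))

open TW
section L3
variable {M : Type*} [TW M]

theorem tt' (s : Bool) : t (!s) * t s = (1 : M) := by
  have := tt (M := M) (!s)
  rwa [Bool.not_not] at this

theorem t_sh (s : Bool) (y : M) : sh y * t s = t s * sh y := arel (Ar_t s) y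

theorem c_t (s r : Bool) : c s * t r = sh (t r) * (c s : M) := by
  have := nat s (Ar_t (M := M) r)
  simpa [d] using this

theorem c_sht (s r : Bool) : c s * sh (t r) = t r * (c s : M) := by
  have h1 := c_t (M := M) (!s) r
  calc c s * sh (t r) = c s * (sh (t r) * c (!s)) * c s := by
        simp only [mul_assoc]; rw [cc', mul_one]
    _ = t r * c s := by rw [← h1, ← mul_assoc, cc, one_mul]

theorem R_t (s : Bool) (x : M) : R x * t s = t s * R x := by
  calc R x * t s = bul x * t s * c s * t s * c s * B := by
        rw [R, mul_assoc, Bt]; simp only [mul_assoc]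
    _ = t s * R x := by
        rw [bul_t, bul_c, t_sh, mul_assoc (t s), bul_c', R, mul_assoc]

theorem R_cc (s : Bool) (x : M) : R x * c s = c s * sh (R x) := by
  calc R x * c s = bul x * sh (c s) * c s * sh B := by
        rw [R, mul_assoc, B_c]; simp only [mul_assoc]
    _ = c s * sh (R x) := by
        rw [← bul_comm, mul_assoc (c s), bul_c, R, map_mul, mul_assoc]

theorem R_cc' (s : Bool) (x : M) : sh (R x) * c s = c s * R x := by
  have h1 := R_cc (!s) x
  calc sh (R x) * c s = c s * c (!s) * sh (R x) * c s := by rw [cc, one_mul]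
    _ = c s * (R x * (c (!s) * c s)) := by rw [mul_assoc (c s), ← h1]; simp only [mul_assoc]
    _ = _ := by rw [cc', mul_one]

end L3

set_option linter.unusedSimpArgs false

section Lib
variable {M : Type*} [TW M]

theorem tl {a b : M} (h : ∀ z : M, a * z = b * z) : a = b := by simpa using h 1

theorem lft {a b : M} (h : a = b) (z : M) : sh a * z = sh b * z := by rw [h]

theorem k_pm0 (z : M) : (c true) * ((c false) * z) = z := by
  have h := congrArg (fun w => w * z) (cc (M := M) true)
  simpa only [mul_assoc, one_mul, Bool.not_true, Bool.not_false] using h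

theorem k_mp0 (z : M) : (c false) * ((c true) * z) = z := by
  have h := congrArg (fun w => w * z) (cc (M := M) false)
  simpa only [mul_assoc, one_mul, Bool.not_true, Bool.not_false] using h

theorem k_tu0 (z : M) : (t true) * ((t false) * z) = z := by
  have h := congrArg (fun w => w * z) (tt (M := M) true)
  simpa only [mul_assoc, one_mul, Bool.not_true, Bool.not_false] using h

theorem k_ut0 (z : M) : (t false) * ((t true) * z) = z := by
  have h := congrArg (fun w => w * z) (tt (M := M) false)
  simpa only [mul_assoc, one_mul, Bool.not_true, Bool.not_false] using h

theorem k_co0 (x : M) (s : Bool) (z : M) : (sh (sh x)) * ((c s) * z) = (c s) * ((sh (sh x)) * z) := by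
  have h := congrArg (fun w => w * z) (arc s x)
  simpa only [mul_assoc, one_mul, Bool.not_true, Bool.not_false] using h

theorem k_ts0 (s : Bool) (x : M) (z : M) : (sh x) * ((t s) * z) = (t s) * ((sh x) * z) := by
  have h := congrArg (fun w => w * z) (t_sh s x)
  simpa only [mul_assoc, one_mul, Bool.not_true, Bool.not_false] using h

theorem k_ct0 (s r : Bool) (z : M) : (c s) * ((t r) * z) = (sh (t r)) * ((c s) * z) := by
  have h := congrArg (fun w => w * z) (c_t (M := M) s r)
  simpa only [mul_assoc, one_mul, Bool.not_true, Bool.not_false] using h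

theorem k_cst0 (s r : Bool) (z : M) : (c s) * ((sh (t r)) * z) = (t r) * ((c s) * z) := by
  have h := congrArg (fun w => w * z) (c_sht (M := M) s r)
  simpa only [mul_assoc, one_mul, Bool.not_true, Bool.not_false] using h

theorem k_bs0 (x : M) (z : M) : B * ((sh x) * z) = (sh (sh x)) * (B * z) := by
  have h := congrArg (fun w => w * z) (B_sh x)
  simpa only [mul_assoc, one_mul, Bool.not_true, Bool.not_false] using h

theorem k_bc0 (s : Bool) (z : M) : B * ((c s) * z) = (sh (c s)) * ((c s) * ((sh B) * z)) := by
  have h := congrArg (fun w => w * z) (B_c (M := M) s)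
  simpa only [mul_assoc, one_mul, Bool.not_true, Bool.not_false] using h

theorem k_sbc0 (s : Bool) (z : M) : (sh B) * ((c s) * z) = (c s) * ((sh (c s)) * (B * z)) := by
  have h := congrArg (fun w => w * z) (shB_c (M := M) s)
  simpa only [mul_assoc, one_mul, Bool.not_true, Bool.not_false] using h

theorem k_bt0 (s : Bool) (z : M) : B * ((t s) * z) = (t s) * ((c s) * ((t s) * ((c s) * (B * z)))) := by
  have h := congrArg (fun w => w * z) (Bt (M := M) s)
  simpa only [mul_assoc, one_mul, Bool.not_true, Bool.not_false] using h

theorem k_br0 (s : Bool) (z : M) : (sh (c s)) * ((c s) * ((sh (c s)) * z)) = (c s) * ((sh (c s)) * ((c s) * z)) := by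
  have h := congrArg (fun w => w * z) (braid (M := M) s)
  simpa only [mul_assoc, one_mul, Bool.not_true, Bool.not_false] using h

theorem k_br_ppm0 (z : M) : (sh (c true)) * ((c true) * ((sh (c false)) * z)) = (c false) * ((sh (c true)) * ((c true) * z)) := by
  have h := congrArg (fun w => w * z) (braid2 (M := M) true)
  simpa only [mul_assoc, one_mul, Bool.not_true, Bool.not_false] using h

theorem k_br_mpp0 (z : M) : (sh (c false)) * ((c true) * ((sh (c true)) * z)) = (c true) * ((sh (c true)) * ((c false) * z)) := by
  have h := congrArg (fun w => w * z) (braid1 (M := M) true)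
  simpa only [mul_assoc, one_mul, Bool.not_true, Bool.not_false] using h

theorem k_br_mmp0 (z : M) : (sh (c false)) * ((c false) * ((sh (c true)) * z)) = (c true) * ((sh (c false)) * ((c false) * z)) := by
  have h := congrArg (fun w => w * z) (braid2 (M := M) false)
  simpa only [mul_assoc, one_mul, Bool.not_true, Bool.not_false] using h

theorem k_br_pmm0 (z : M) : (sh (c true)) * ((c false) * ((sh (c false)) * z)) = (c false) * ((sh (c false)) * ((c true) * z)) := by
  have h := congrArg (fun w => w * z) (braid1 (M := M) false)
  simpa only [mul_assoc, one_mul, Bool.not_true, Bool.not_false] using h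

theorem k_pm1 (z : M) : (sh (c true)) * ((sh (c false)) * z) = z := by
  have h := congrArg (fun w => w * z) (congrArg sh (cc (M := M) true))
  simpa only [mul_assoc, map_mul, map_one, one_mul, Bool.not_true, Bool.not_false] using h

theorem k_mp1 (z : M) : (sh (c false)) * ((sh (c true)) * z) = z := by
  have h := congrArg (fun w => w * z) (congrArg sh (cc (M := M) false))
  simpa only [mul_assoc, map_mul, map_one, one_mul, Bool.not_true, Bool.not_false] using h

theorem k_ut1 (z : M) : (sh (t false)) * ((sh (t true)) * z) = z := by
  have h := congrArg (fun w => w * z) (congrArg sh (tt (M := M) false))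
  simpa only [mul_assoc, map_mul, map_one, one_mul, Bool.not_true, Bool.not_false] using h

theorem k_co1 (x : M) (s : Bool) (z : M) : (sh (sh (sh x))) * ((sh (c s)) * z) = (sh (c s)) * ((sh (sh (sh x))) * z) := by
  have h := congrArg (fun w => w * z) (congrArg sh (arc s x))
  simpa only [mul_assoc, map_mul, map_one, one_mul, Bool.not_true, Bool.not_false] using h

theorem k_ts1 (s : Bool) (x : M) (z : M) : (sh (sh x)) * ((sh (t s)) * z) = (sh (t s)) * ((sh (sh x)) * z) := by
  have h := congrArg (fun w => w * z) (congrArg sh (t_sh s x))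
  simpa only [mul_assoc, map_mul, map_one, one_mul, Bool.not_true, Bool.not_false] using h

theorem k_ct1 (s r : Bool) (z : M) : (sh (c s)) * ((sh (t r)) * z) = (sh (sh (t r))) * ((sh (c s)) * z) := by
  have h := congrArg (fun w => w * z) (congrArg sh (c_t (M := M) s r))
  simpa only [mul_assoc, map_mul, map_one, one_mul, Bool.not_true, Bool.not_false] using h

theorem k_bs1 (x : M) (z : M) : (sh B) * ((sh (sh x)) * z) = (sh (sh (sh x))) * ((sh B) * z) := by
  have h := congrArg (fun w => w * z) (congrArg sh (B_sh x))
  simpa only [mul_assoc, map_mul, map_one, one_mul, Bool.not_true, Bool.not_false] using h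

theorem k_sbc1 (s : Bool) (z : M) : (sh (sh B)) * ((sh (c s)) * z) = (sh (c s)) * ((sh (sh (c s))) * ((sh B) * z)) := by
  have h := congrArg (fun w => w * z) (congrArg sh (shB_c (M := M) s))
  simpa only [mul_assoc, map_mul, map_one, one_mul, Bool.not_true, Bool.not_false] using h

theorem k_br1 (s : Bool) (z : M) : (sh (sh (c s))) * ((sh (c s)) * ((sh (sh (c s))) * z)) = (sh (c s)) * ((sh (sh (c s))) * ((sh (c s)) * z)) := by
  have h := congrArg (fun w => w * z) (congrArg sh (braid (M := M) s))
  simpa only [mul_assoc, map_mul, map_one, one_mul, Bool.not_true, Bool.not_false] using h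

theorem k_br_pmm1 (z : M) : (sh (sh (c true))) * ((sh (c false)) * ((sh (sh (c false))) * z)) = (sh (c false)) * ((sh (sh (c false))) * ((sh (c true)) * z)) := by
  have h := congrArg (fun w => w * z) (congrArg sh (braid1 (M := M) false))
  simpa only [mul_assoc, map_mul, map_one, one_mul, Bool.not_true, Bool.not_false] using h

theorem k_mp2 (z : M) : (sh (sh (c false))) * ((sh (sh (c true))) * z) = z := by
  have h := congrArg (fun w => w * z) (congrArg sh (congrArg sh (cc (M := M) false)))
  simpa only [mul_assoc, map_mul, map_one, one_mul, Bool.not_true, Bool.not_false] using h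

end Lib

section NB
variable {M : Type*} [TW M]

theorem N_beta {be : M} (hb : Ar be 2 0) :
    t true * (sh (t true) * (c true * (c true * be))) = be := by
  have be_ar0 : ∀ x z : M, sh (sh x) * (be * z) = be * (x * z) := fun x z => by
    rw [← mul_assoc, ← mul_assoc]; exact congrArg (· * z) (arel hb x)
  have n1 : ∀ s, ∀ z : M, c s * (sh (c s) * (be * z)) = sh be * z := fun s z => by
    have h := congrArg (· * z) (nat s hb)
    simpa only [d, mul_assoc, map_one, mul_one, map_mul] using h
  have n2 : ∀ z : M, sh (c true) * (c true * (sh be * z)) = be * z := fun z => by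
    rw [← n1 false, ← mul_assoc (c true) (c false), show c true * c false = (1 : M) from cc true,
      one_mul, ← mul_assoc, show sh (c true) * sh (c false) = (1 : M) from shcc true, one_mul]
  obtain ⟨rb, hrb⟩ : ∃ r : M, r = R be := ⟨_, rfl⟩
  have h1 : ∀ z : M, rb * (t true * z) = t true * (rb * z) := fun z => by
    rw [← mul_assoc, ← mul_assoc, hrb, R_t]
  have h2 : ∀ z : M, rb * (c true * z) = c true * (sh rb * z) := fun z => by
    rw [← mul_assoc, ← mul_assoc, hrb, R_cc]
  have h3 : ∀ z : M, sh rb * (c true * z) = c true * (rb * z) := fun z => by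
    rw [← mul_assoc, ← mul_assoc, hrb, R_cc']
  have h4 : ∀ z : M, rb * (B * (B * z)) = sh be * z := fun z => by
    have := congrArg (· * z) hb
    simpa [pow_two, ← hrb, mul_assoc] using this
  have h5 : ∀ z : M, rb * (sh (c true) * z) = sh (c true) * (rb * z) := fun z => by
    rw [← mul_assoc, ← mul_assoc, hrb, RL]
  have h5b : ∀ z : M, sh rb * (t true * z) = t true * (sh rb * z) := fun z => by
    rw [← mul_assoc, ← mul_assoc, t_sh]
  have key : sh be * t true = t true * (c true * (t true * (c true * (sh (c true) *
      (c true * (t true * (c true * (sh (c true) * sh be)))))))) := by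
    refine tl fun z => ?_
    simp only [mul_assoc, one_mul]
    calc (sh be) * ((t true) * z)
      _ = rb * (B * (B * ((t true) * z))) := by
        rw [← h4]
      _ = rb * (B * ((t true) * ((c true) * ((t true) * ((c true) * (B * z)))))) := by
        rw [k_bt0 true]
      _ = rb * ((t true) * ((c true) * ((t true) * ((c true) * (B * ((c true) * ((t true) * ((c true) * (B * z))))))))) := by
        rw [k_bt0 true]
      _ = rb * ((t true) * ((c true) * ((t true) * ((c true) * ((sh (c true)) * ((c true) * ((sh B) * ((t true) * ((c true) * (B * z)))))))))) := by
        rw [k_bc0 true]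
      _ = rb * ((t true) * ((c true) * ((t true) * ((c true) * ((sh (c true)) * ((c true) * ((t true) * ((sh B) * ((c true) * (B * z)))))))))) := by
        rw [k_ts0 true B]
      _ = rb * ((t true) * ((c true) * ((t true) * ((c true) * ((sh (c true)) * ((c true) * ((t true) * ((c true) * ((sh (c true)) * (B * (B * z))))))))))) := by
        rw [k_sbc0 true]
      _ = (t true) * (rb * ((c true) * ((t true) * ((c true) * ((sh (c true)) * ((c true) * ((t true) * ((c true) * ((sh (c true)) * (B * (B * z))))))))))) := by
        rw [h1]
      _ = (t true) * ((c true) * ((t true) * ((sh rb) * ((c true) * ((sh (c true)) * ((c true) * ((t true) * ((c true) * ((sh (c true)) * (B * (B * z))))))))))) := by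
        symm
        rw [← k_ts0 true rb, ← h2]
      _ = (t true) * ((c true) * ((t true) * ((c true) * ((sh (c true)) * (rb * ((c true) * ((t true) * ((c true) * ((sh (c true)) * (B * (B * z))))))))))) := by
        rw [h3, h5]
      _ = (t true) * ((c true) * ((t true) * ((c true) * ((sh (c true)) * ((c true) * ((t true) * ((sh rb) * ((c true) * ((sh (c true)) * (B * (B * z))))))))))) := by
        symm
        rw [← k_ts0 true rb, ← h2]
      _ = (t true) * ((c true) * ((t true) * ((c true) * ((sh (c true)) * ((c true) * ((t true) * ((c true) * (rb * ((sh (c true)) * (B * (B * z))))))))))) := by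
        rw [h3]
      _ = (t true) * ((c true) * ((t true) * ((c true) * ((sh (c true)) * ((c true) * ((t true) * ((c true) * ((sh (c true)) * (rb * (B * (B * z))))))))))) := by
        symm
        rw [← h5]
      _ = (t true) * ((c true) * ((t true) * ((c true) * ((sh (c true)) * ((c true) * ((t true) * ((c true) * ((sh (c true)) * ((sh be) * z))))))))) := by
        rw [h4]
  have key2 : sh (t true * (sh (t true) * (c true * (c true * be)))) = sh be := by
    simp only [map_mul]
    have kk : ∀ z : M, sh be * (t true * z) = t true * (c true * (t true * (c true * (sh (c true) *
      (c true * (t true * (c true * (sh (c true) * (sh be * z))))))))) := fun z => by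
      have := congrArg (· * z) key
      simpa only [mul_assoc] using this
    refine tl fun z => ?_
    simp only [mul_assoc, one_mul]
    calc (sh (t true)) * ((sh (sh (t true))) * ((sh (c true)) * ((sh (c true)) * ((sh be) * z))))
      _ = (sh (t true)) * ((sh (sh (t true))) * ((sh (c true)) * ((sh (c true)) * ((c true) * ((sh (c true)) * (be * z)))))) := by
        rw [← n1 true]
      _ = (sh (t true)) * ((sh (sh (t true))) * ((sh (c true)) * ((sh (c true)) * ((c true) * ((sh (c true)) * ((sh (c true)) * ((c true) * ((sh be) * z)))))))) := by
        rw [← n2]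
      _ = (sh (t true)) * ((c true) * ((sh (c true)) * ((c true) * ((t true) * ((c true) * ((sh (c true)) * ((c true) * ((sh be) * z)))))))) := by
        rw [← k_ct1 true true, k_br0 true, ← k_ct0 true true, ← k_ts0 true (c true), k_br0 true]
      _ = (c true) * ((t true) * ((c true) * ((sh (c true)) * ((c true) * ((t true) * ((c true) * ((sh (c true)) * ((sh be) * z)))))))) := by
        symm
        rw [k_ct0 true true, ← k_br0 true, k_ts0 true (c true), k_br0 true]
      _ = (t false) * ((t true) * ((c true) * ((t true) * ((c true) * ((sh (c true)) * ((c true) * ((t true) * ((c true) * ((sh (c true)) * ((sh be) * z)))))))))) := by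
        symm
        rw [k_ut0]
      _ = (t false) * ((sh be) * ((t true) * z)) := by
        rw [← kk]
      _ = (sh be) * z := by
        rw [← k_ts0 false be, k_ut0]
  exact sh_inj key2

/-- mate of the twist condition -/
theorem tbe {al be : M} (hb : Ar be 2 0) (d1 : al * sh be = 1)
    (d2 : sh al * be = 1) (dT : al * t true = al * sh (t true)) :
    t true * be = sh (t true) * be := by
  have be_ar0 : ∀ x z : M, sh (sh x) * (be * z) = be * (x * z) := fun x z => by
    rw [← mul_assoc, ← mul_assoc]; exact congrArg (· * z) (arel hb x)
  have e1 : ∀ z : M, sh al * (sh (sh be) * z) = z := fun z => by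
    rw [← mul_assoc, ← map_mul, d1, map_one, one_mul]
  have e2 : ∀ z : M, sh al * (be * z) = z := fun z => by
    rw [← mul_assoc, d2, one_mul]
  have e3 : ∀ z : M, sh al * (sh (t true) * z) = sh al * (sh (sh (t true)) * z) := fun z => by
    rw [← mul_assoc, ← mul_assoc, ← map_mul, dT, map_mul]
  symm
  refine tl fun z => ?_
  simp only [mul_assoc, one_mul]
  calc (sh (t true)) * (be * z)
    _ = (sh al) * ((sh (sh be)) * ((sh (t true)) * (be * z))) := by
      symm
      rw [e1]
    _ = (sh al) * ((sh (t true)) * ((sh (sh be)) * (be * z))) := by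
      rw [k_ts1 true be]
    _ = (sh al) * ((sh (sh (t true))) * ((sh (sh be)) * (be * z))) := by
      symm
      rw [← e3]
    _ = (sh al) * ((sh (sh (t true))) * (be * (be * z))) := by
      rw [be_ar0 be]
    _ = (sh al) * (be * ((t true) * (be * z))) := by
      symm
      rw [← be_ar0 (t true)]
    _ = (t true) * (be * z) := by
      rw [e2]

theorem kap {be : M} (hb : Ar be 2 0) (tb : t true * be = sh (t true) * be) :
    c true * (t true * be) = c false * (t false * be) := by
  have e1 : ∀ z : M, t true * (be * z) = sh (t true) * (be * z) := fun z => by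
    rw [← mul_assoc, ← mul_assoc, tb]
  have e2 : ∀ z : M, t true * (sh (t true) * (c true * (c true * (be * z)))) = be * z := fun z => by
    simpa only [mul_assoc] using congrArg (· * z) (N_beta hb)
  refine tl fun z => ?_
  simp only [mul_assoc, one_mul]
  calc (c true) * ((t true) * (be * z))
    _ = (c true) * ((t true) * ((sh (t false)) * ((sh (t true)) * (be * z)))) := by
      symm
      rw [k_ut1]
    _ = (c true) * ((t true) * ((sh (t false)) * ((t true) * (be * z)))) := by
      rw [← e1]
    _ = (c true) * ((sh (t false)) * ((t true) * ((t true) * (be * z)))) := by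
      symm
      rw [k_ts0 true (t false)]
    _ = (c true) * ((sh (t false)) * ((t true) * ((sh (t true)) * (be * z)))) := by
      rw [e1]
    _ = (t false) * ((c true) * ((t true) * ((sh (t true)) * (be * z)))) := by
      symm
      rw [← k_cst0 true false]
    _ = (t false) * ((c false) * ((c true) * ((c true) * ((t true) * ((sh (t true)) * (be * z)))))) := by
      symm
      rw [k_mp0]
    _ = (t false) * ((c false) * ((t true) * ((c true) * ((c true) * ((sh (t true)) * (be * z)))))) := by
      rw [k_ct0 true true, k_cst0 true true]
    _ = (t false) * ((c false) * (be * z)) := by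
      symm
      conv_lhs => rw [← e2, ← k_ct0 true true, ← k_cst0 true true (be * z)]
    _ = (c false) * ((sh (t false)) * (be * z)) := by
      rw [← k_cst0 false false]
    _ = (c false) * ((sh (t false)) * ((t true) * ((t false) * (be * z)))) := by
      symm
      rw [k_tu0]
    _ = (c false) * ((sh (t false)) * (be * z)) := by
      rw [k_tu0]
    _ = (c false) * ((t true) * ((t false) * ((sh (t false)) * (be * z)))) := by
      symm
      rw [k_tu0]
    _ = (c false) * ((t true) * ((t false) * ((t false) * ((sh (t false)) * ((t true) * (be * z)))))) := by
      symm
      rw [← k_ts0 false (t false), k_ut0]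
    _ = (c false) * ((t true) * ((t false) * ((t false) * ((sh (t false)) * ((sh (t true)) * (be * z)))))) := by
      rw [e1]
    _ = (c false) * ((t false) * (be * z)) := by
      rw [k_tu0, k_ut1]

end NB

section RT
variable {M : Type*} [TW M]

theorem Ar_t2 (s : Bool) : Ar (t s : M) 2 2 := (Ar_t s).succ

/-- the trace combinator of a duality -/
def mkTr (al ka : M) : M := R ka * (sh al * B)

theorem mkTr_eq (al ka : M) : mkTr al ka = sh al * (R ka * B) := by
  rw [mkTr, ← mul_assoc, RL, mul_assoc]

theorem mkTr_ap (al ka a : M) : ap (mkTr al ka) a = al * (sh a * ka) := by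
  rw [mkTr, ap_mul, ap_mul, R_ap, sh_ap, ← sh_def, mul_assoc]

theorem mkTr_left {al : M} (ka : M) (ha : Ar al 0 2) : Ar (mkTr al ka) 1 2 := by
  rw [mkTr_eq, R, mul_assoc]
  exact ha.sh.mul ((Ar_bul ka).succ.succ.succ.mul ((Ar_B.succ.succ).mul Ar_B.succ))

theorem mkTr_right (al : M) {ka : M} (hk : Ar ka 2 0) :
    sh (mkTr al ka) * (R B * B) = B * mkTr al ka := by
  have hk' : R ka * (B * B) = sh ka := by simpa [Ar, pow_two] using hk
  have e1 : ∀ z : M, R B * (sh B * z) = sh B * (R B * z) := fun z => by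
    rw [← mul_assoc, RL, mul_assoc]
  have e2 : ∀ z : M, R B * (B * (B * z)) = sh B * (B * z) := fun z => by
    rw [← mul_assoc B, ← mul_assoc, RB, mul_assoc]
  have e3 : ∀ z : M, R B * (sh (bul ka) * z) = sh (bul ka) * (R B * z) := fun z => by
    rw [← mul_assoc, RL, mul_assoc]
  have e4 : sh (R ka) * (sh B * (R B * B)) = B * (R ka * B) := by
    have h5 : R (sh ka) = R B * (R B * (R B * (sh (bul ka) * B))) := by
      rw [← hk', show R ka = bul ka * B from rfl, R_mul, R_mul, R_mul, R_bul]; simp only [mul_assoc]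
    rw [← mul_assoc B, ← R_sh, h5, show R ka = bul ka * B from rfl, map_mul]
    simp only [mul_assoc]
    have e5 : R B * (B * B) = sh B * (B : M) := RB
    rw [e3, e3, e3, e2, e1, e1, e5, e1]
  rw [mkTr_eq, map_mul, map_mul, ← mul_assoc B, B_sh, mul_assoc, mul_assoc, e4, mul_assoc]

theorem mkTr_yank {al be ka : M} (ha : Ar al 0 2) (d2 : sh al * be = 1)
    (hp : ka = c true * (t true * be)) (hm : ka = c false * (t false * be)) (s : Bool) :
    ap (mkTr al ka) (c s) = t s := by
  have al_ar0 : ∀ x z : M, x * (al * z) = al * (sh (sh x) * z) := fun x z => by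
    rw [← mul_assoc, ← mul_assoc]; exact congrArg (· * z) (arel ha x)
  have al_n : ∀ s, ∀ z : M, sh al * (c s * (sh (c s) * z)) = al * z := fun s z => by
    have h := congrArg (· * z) (nat s ha)
    simpa only [d, mul_assoc, map_one, mul_one, one_mul, map_mul] using h.symm
  have e2 : ∀ z : M, sh al * (be * z) = z := fun z => by
    rw [← mul_assoc, d2, one_mul]
  rw [mkTr_ap]
  cases s
  · rw [hm]
    show _ = t false
    refine tl fun z => ?_
    simp only [mul_assoc, one_mul]
    calc al * ((sh (c false)) * ((c false) * ((t false) * (be * z))))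
      _ = (sh al) * ((c true) * ((sh (c true)) * ((sh (c false)) * ((c false) * ((t false) * (be * z)))))) := by
        rw [← al_n true]
      _ = (sh al) * ((t false) * (be * z)) := by
        rw [k_pm1, k_pm0]
      _ = (t false) * ((sh al) * (be * z)) := by
        rw [k_ts0 false al]
      _ = (t false) * z := by
        rw [e2]
  · rw [hp]
    show _ = t true
    refine tl fun z => ?_
    simp only [mul_assoc, one_mul]
    calc al * ((sh (c true)) * ((c true) * ((t true) * (be * z))))
      _ = (sh al) * ((c false) * ((sh (c false)) * ((sh (c true)) * ((c true) * ((t true) * (be * z)))))) := by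
        rw [← al_n false]
      _ = (sh al) * ((t true) * (be * z)) := by
        rw [k_mp1, k_mp0]
      _ = (t true) * ((sh al) * (be * z)) := by
        rw [k_ts0 true al]
      _ = (t true) * z := by
        rw [e2]

theorem mkTr_exch {al ka : M} (ha : Ar al 0 2) (hk : Ar ka 2 0) :
    ((mkTr al ka * mkTr al ka) * R (c false)) * sh (c true) = mkTr al ka * mkTr al ka := by
  have al_ar0 : ∀ x z : M, x * (al * z) = al * (sh (sh x) * z) := fun x z => by
    rw [← mul_assoc, ← mul_assoc]; exact congrArg (· * z) (arel ha x)
  have al_n : ∀ s, ∀ z : M, sh al * (c s * (sh (c s) * z)) = al * z := fun s z => by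
    have h := congrArg (· * z) (nat s ha)
    simpa only [d, mul_assoc, map_one, mul_one, one_mul, map_mul] using h.symm
  have al_n1 : ∀ s, ∀ z : M, sh (sh al) * (sh (c s) * (sh (sh (c s)) * z)) = sh al * z :=
      fun s z => by
    have h := congrArg (fun w => sh w * z) (nat s ha)
    simpa only [d, mul_assoc, map_one, mul_one, one_mul, map_mul] using h.symm
  have ka_ar0 : ∀ x z : M, sh (sh x) * (ka * z) = ka * (x * z) := fun x z => by
    rw [← mul_assoc, ← mul_assoc]; exact congrArg (· * z) (arel hk x)
  have n1 : ∀ s, ∀ z : M, c s * (sh (c s) * (ka * z)) = sh ka * z := fun s z => by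
    have h := congrArg (· * z) (nat s hk)
    simpa only [d, mul_assoc, map_one, mul_one, map_mul] using h
  have n11 : ∀ s, ∀ z : M, sh (c s) * (sh (sh (c s)) * (sh ka * z)) = sh (sh ka) * z := fun s z => by
    have h := congrArg (fun w => sh w * z) (nat s hk)
    simpa only [d, mul_assoc, map_one, mul_one, map_mul] using h
  have E1 : al * (sh al * sh (sh (c true))) = al * (sh al * c true) := by
    refine tl fun z => ?_
    simp only [mul_assoc, one_mul]
    calc al * ((sh al) * ((sh (sh (c true))) * z))
      _ = al * ((sh (sh al)) * ((sh (c false)) * ((sh (sh (c false))) * ((sh (sh (c true))) * z)))) := by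
        rw [← al_n1 false]
      _ = al * ((sh (sh al)) * ((sh (c false)) * z)) := by
        rw [k_mp2]
      _ = al * (al * ((sh (c false)) * z)) := by
        symm
        rw [al_ar0 al]
      _ = al * ((sh al) * ((c true) * ((sh (c true)) * ((sh (c false)) * z)))) := by
        rw [← al_n true ((sh (c false)) * z)]
      _ = al * ((sh al) * ((c true) * z)) := by
        rw [k_pm1]
  have E2 : c true * (sh (sh (c false)) * (sh ka * ka)) = sh ka * ka := by
    refine tl fun z => ?_
    simp only [mul_assoc, one_mul]
    calc (c true) * ((sh (sh (c false))) * ((sh ka) * (ka * z)))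
      _ = (c true) * ((sh (sh (c false))) * ((c false) * ((sh (c false)) * (ka * (ka * z))))) := by
        rw [← n1 false]
      _ = (sh (sh (c false))) * ((sh (c false)) * (ka * (ka * z))) := by
        rw [← k_co0 (c false) true, k_pm0]
      _ = (sh (sh (c false))) * ((sh (c false)) * ((sh (sh ka)) * (ka * z))) := by
        rw [← ka_ar0 ka]
      _ = (sh (sh (c false))) * ((sh (c false)) * ((sh (c true)) * ((sh (sh (c true))) * ((sh ka) * (ka * z))))) := by
        rw [← n11 true]
      _ = (sh ka) * (ka * z) := by
        rw [k_mp1, k_mp2]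
  have E3 : mkTr al ka * mkTr al ka = sh (al * sh al) * (R (sh ka * ka) * (B * B)) := by
    calc _ = sh al * (R ka * ((B * sh al) * (R ka * B))) := by rw [mkTr_eq]; simp only [mul_assoc]
      _ = sh al * ((R ka * sh (sh al)) * ((B * R ka) * B)) := by rw [B_sh]; simp only [mul_assoc]
      _ = _ := by rw [RL, ← R_sh, R_mul, map_mul]; simp only [mul_assoc]
  have E4 : (B * B) * R (c false) = R (sh (sh (c false))) * (B * (B : M)) := by
    rw [mul_assoc, ← R_sh, ← mul_assoc, ← R_sh, mul_assoc]
  have E5 : (B * B) * sh (c true) = sh (sh (sh (c true))) * (B * (B : M)) := by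
    rw [mul_assoc, B_sh, ← mul_assoc, B_sh, mul_assoc]
  rw [E3]
  calc sh (al * sh al) * (R (sh ka * ka) * (B * B)) * R (c false) * sh (c true)
      = sh (al * sh al) * (R (sh ka * ka) * (((B * B) * R (c false)) * sh (c true))) := by
        simp only [mul_assoc]
    _ = sh (al * sh al) * ((R (sh ka * ka) * R (sh (sh (c false)))) *
        sh (sh (sh (c true))) * (B * B)) := by
        rw [E4, mul_assoc _ (B * B), E5]; simp only [mul_assoc]
    _ = sh (al * (sh al * sh (sh (c true)))) * (R (sh (sh (c false)) * (sh ka * ka)) * (B * B)) := by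
        rw [← R_mul, RL]; simp only [map_mul, mul_assoc]
    _ = sh (al * sh al) * (R (sh (sh (c false)) * (sh ka * ka)) * (sh (c true) * (B * B))) := by
        rw [E1, ← mul_assoc (R _) (sh (c true)), RL]; simp only [map_mul, mul_assoc]
    _ = sh (al * sh al) * (R (sh ka * ka) * (B * B)) := by
        rw [← Rc, ← mul_assoc (R _) (R (c true)), ← R_mul, E2]

end RT

section TR
variable {M : Type*} [TW M]

/-- the trace axioms used below -/
structure IsTr (Tr : M) : Prop where
  hL : Ar Tr 1 2
  hR : sh Tr * (R B * B) = B * Tr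
  hy : ∀ s, ap Tr (c s) = t s

variable {Tr : M}

theorem T1 (h : IsTr Tr) (x a : M) : ap Tr (sh x * a) = x * ap Tr a := by
  have h1 := congrArg (fun z => ap z a) (arel h.hL x)
  simp only [Function.iterate_succ, Function.comp_apply, Function.iterate_zero, id_eq, ap_mul] at h1
  rw [sh_ap, sh_ap] at h1
  exact h1.symm

theorem R_T (h : IsTr Tr) (a : M) : R (ap Tr a) = Tr * (R a * B) := by
  have h1 := h.hL
  simp only [Ar, pow_one, pow_two] at h1
  calc R (ap Tr a) = bul a * (R Tr * B) := by rw [R, bul_ap', R]; simp only [mul_assoc]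
    _ = (bul a * sh Tr) * (B * B) := by rw [h1]; simp only [mul_assoc]
    _ = _ := by rw [← bul_comm, R]; simp only [mul_assoc]

theorem T_sh (h : IsTr Tr) (a : M) : Tr * (sh a * B) = sh (ap Tr a) := by
  have h1 := congrArg (fun z => ap z a) h.hR
  simp only [ap_mul, R_ap, sh_ap] at h1
  rw [← sh_def, ← sh_def] at h1
  exact h1

theorem T2 (h : IsTr Tr) (a x : M) : ap Tr (a * sh x) = ap Tr a * x := by
  have h1 := congrArg (fun z => ap z x) (T_sh h a)
  simp only [ap_mul, sh_ap] at h1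
  rw [← sh_def] at h1
  exact h1

/-- the element `C I I` followed by the trace -/
def eta (Tr : M) : M := bul 1 * Tr

theorem Ar_eta (h : IsTr Tr) : Ar (eta Tr) 0 2 := (Ar_bul 1).mul h.hL

theorem E1 (h : IsTr Tr) (a z : M) : eta Tr * (sh a * (B * (B * z))) = ap Tr a * z := by
  have h2 : bul 1 * B = (1 : M) := R_one
  calc _ = bul 1 * (Tr * (sh a * B)) * (B * z) := by rw [eta]; simp only [mul_assoc]
    _ = ap Tr a * ((bul 1 * B) * z) := by rw [T_sh h, ← bul_comm]; simp only [mul_assoc]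
    _ = _ := by rw [h2, one_mul]

/-- left composite of `C` with two arguments -/
def kk (s : Bool) : M := bul (c s) * (B * B)

theorem Ar_kk (s : Bool) : Ar (kk s : M) 2 1 :=
  (Ar_bul _).succ.succ.mul (Ar_B.succ.mul Ar_B)

theorem kk_B (s : Bool) : kk s * B = sh (c s) * (B * (B : M)) := by
  rw [← Rc, kk, R]; simp only [mul_assoc]

theorem T_slide (h : IsTr Tr) (s : Bool) (a : M) :
    sh (ap Tr a) = ap Tr (c s * (sh a * c (!s))) := by
  apply c_inj (!s)
  have hw : R (c (!s)) * ap (c (!s)) 1 = B * ap (c (!s)) (1 : M) := by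
    rw [R_c, one_mul, BC1, map_one, mul_one]
  symm
  calc ap (c (!s)) (ap Tr (c s * (sh a * c (!s))))
      = Tr * (R (c (!s)) * (R (sh a) * (R (c s) * (B * ap (c (!s)) 1)))) := by
        rw [c_eq, R_T h, R_mul, R_mul]; simp only [mul_assoc]
    _ = Tr * (R (c (!s)) * (R (sh a) * ap (c (!s)) 1)) := by
        rw [← hw, ← mul_assoc (R (c s)), ← R_mul, cc', R_one, one_mul]
    _ = Tr * ((R (c (!s)) * sh a) * ap (c (!s)) 1) := by
        rw [← c_eq, sh_c1]; simp only [mul_assoc]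
    _ = (Tr * (sh a * B)) * ap (c (!s)) 1 := by
        rw [RL, mul_assoc, hw]; simp only [mul_assoc]
    _ = _ := by rw [T_sh h, sh_c1]

theorem Ar_T (h : IsTr Tr) {a : M} (ha : Ar a 3 1) : Ar (ap Tr a) 2 0 := by
  have h1 : R a * (B * (B * B)) = sh a * B := by
    simpa only [Ar, pow_succ', pow_zero, mul_one] using ha
  simp only [Ar, pow_two, pow_zero, mul_one]
  rw [R_T h, ← T_sh h, ← h1]; simp only [mul_assoc]

theorem et_ar0 (h : IsTr Tr) (x z : M) : x * ((eta Tr) * z) = (eta Tr) * ((sh (sh x)) * z) := by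
  have h1 := congrArg (fun w => w * z) (arel (Ar_eta h) x)
  simpa only [Function.iterate_succ, Function.comp_apply, Function.iterate_zero, id_eq,
    mul_assoc, map_mul, map_one, mul_one, one_mul, d] using h1

theorem et_ar1 (h : IsTr Tr) (x z : M) : (sh x) * ((sh (eta Tr)) * z) = (sh (eta Tr)) * ((sh (sh (sh x))) * z) := by
  have h1 := congrArg (fun w => sh (w) * z) (arel (Ar_eta h) x)
  simpa only [Function.iterate_succ, Function.comp_apply, Function.iterate_zero, id_eq,
    mul_assoc, map_mul, map_one, mul_one, one_mul, d] using h1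

theorem et_ar2 (h : IsTr Tr) (x z : M) : (sh (sh x)) * ((sh (sh (eta Tr))) * z) = (sh (sh (eta Tr))) * ((sh (sh (sh (sh x)))) * z) := by
  have h1 := congrArg (fun w => sh (sh (w)) * z) (arel (Ar_eta h) x)
  simpa only [Function.iterate_succ, Function.comp_apply, Function.iterate_zero, id_eq,
    mul_assoc, map_mul, map_one, mul_one, one_mul, d] using h1

theorem et_ar3 (h : IsTr Tr) (x z : M) : (sh (sh (sh x))) * ((sh (sh (sh (eta Tr)))) * z) = (sh (sh (sh (eta Tr)))) * ((sh (sh (sh (sh (sh x))))) * z) := by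
  have h1 := congrArg (fun w => sh (sh (sh (w))) * z) (arel (Ar_eta h) x)
  simpa only [Function.iterate_succ, Function.comp_apply, Function.iterate_zero, id_eq,
    mul_assoc, map_mul, map_one, mul_one, one_mul, d] using h1

theorem km_ar0 (x z : M) : (sh (sh x)) * ((kk false) * z) = (kk false) * ((sh x) * z) := by
  have h1 := congrArg (fun w => w * z) (arel (Ar_kk (M := M) false) x)
  simpa only [Function.iterate_succ, Function.comp_apply, Function.iterate_zero, id_eq,
    mul_assoc, map_mul, map_one, mul_one, one_mul, d] using h1

theorem km_ar1 (x z : M) : (sh (sh (sh x))) * ((sh (kk false)) * z) = (sh (kk false)) * ((sh (sh x)) * z) := by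
  have h1 := congrArg (fun w => sh (w) * z) (arel (Ar_kk (M := M) false) x)
  simpa only [Function.iterate_succ, Function.comp_apply, Function.iterate_zero, id_eq,
    mul_assoc, map_mul, map_one, mul_one, one_mul, d] using h1

theorem km_ar2 (x z : M) : (sh (sh (sh (sh x)))) * ((sh (sh (kk false))) * z) = (sh (sh (kk false))) * ((sh (sh (sh x))) * z) := by
  have h1 := congrArg (fun w => sh (sh (w)) * z) (arel (Ar_kk (M := M) false) x)
  simpa only [Function.iterate_succ, Function.comp_apply, Function.iterate_zero, id_eq,
    mul_assoc, map_mul, map_one, mul_one, one_mul, d] using h1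

theorem km_ar3 (x z : M) : (sh (sh (sh (sh (sh x))))) * ((sh (sh (sh (kk false)))) * z) = (sh (sh (sh (kk false)))) * ((sh (sh (sh (sh x)))) * z) := by
  have h1 := congrArg (fun w => sh (sh (sh (w))) * z) (arel (Ar_kk (M := M) false) x)
  simpa only [Function.iterate_succ, Function.comp_apply, Function.iterate_zero, id_eq,
    mul_assoc, map_mul, map_one, mul_one, one_mul, d] using h1

theorem kp_ar0 (x z : M) : (sh (sh x)) * ((kk true) * z) = (kk true) * ((sh x) * z) := by
  have h1 := congrArg (fun w => w * z) (arel (Ar_kk (M := M) true) x)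
  simpa only [Function.iterate_succ, Function.comp_apply, Function.iterate_zero, id_eq,
    mul_assoc, map_mul, map_one, mul_one, one_mul, d] using h1

theorem kp_ar1 (x z : M) : (sh (sh (sh x))) * ((sh (kk true)) * z) = (sh (kk true)) * ((sh (sh x)) * z) := by
  have h1 := congrArg (fun w => sh (w) * z) (arel (Ar_kk (M := M) true) x)
  simpa only [Function.iterate_succ, Function.comp_apply, Function.iterate_zero, id_eq,
    mul_assoc, map_mul, map_one, mul_one, one_mul, d] using h1

theorem kp_ar2 (x z : M) : (sh (sh (sh (sh x)))) * ((sh (sh (kk true))) * z) = (sh (sh (kk true))) * ((sh (sh (sh x))) * z) := by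
  have h1 := congrArg (fun w => sh (sh (w)) * z) (arel (Ar_kk (M := M) true) x)
  simpa only [Function.iterate_succ, Function.comp_apply, Function.iterate_zero, id_eq,
    mul_assoc, map_mul, map_one, mul_one, one_mul, d] using h1

theorem kp_ar3 (x z : M) : (sh (sh (sh (sh (sh x))))) * ((sh (sh (sh (kk true)))) * z) = (sh (sh (sh (kk true)))) * ((sh (sh (sh (sh x)))) * z) := by
  have h1 := congrArg (fun w => sh (sh (sh (w))) * z) (arel (Ar_kk (M := M) true) x)
  simpa only [Function.iterate_succ, Function.comp_apply, Function.iterate_zero, id_eq,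
    mul_assoc, map_mul, map_one, mul_one, one_mul, d] using h1

theorem et_n0 (h : IsTr Tr) (s : Bool) (z : M) :
    (sh (eta Tr)) * ((c s) * ((sh (c s)) * z)) = (eta Tr) * z := by
  have h1 := congrArg (fun w => w * z) (nat s (Ar_eta h)).symm
  simpa only [Function.iterate_succ, Function.comp_apply, Function.iterate_zero, id_eq,
    mul_assoc, map_mul, map_one, mul_one, one_mul, d] using h1

theorem et_n1 (h : IsTr Tr) (s : Bool) (z : M) :
    (sh (sh (eta Tr))) * ((sh (c s)) * ((sh (sh (c s))) * z)) = (sh (eta Tr)) * z := by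
  have h1 := congrArg (fun w => sh (w) * z) (nat s (Ar_eta h)).symm
  simpa only [Function.iterate_succ, Function.comp_apply, Function.iterate_zero, id_eq,
    mul_assoc, map_mul, map_one, mul_one, one_mul, d] using h1

theorem et_n2 (h : IsTr Tr) (s : Bool) (z : M) :
    (sh (sh (sh (eta Tr)))) * ((sh (sh (c s))) * ((sh (sh (sh (c s)))) * z)) = (sh (sh (eta Tr))) * z := by
  have h1 := congrArg (fun w => sh (sh (w)) * z) (nat s (Ar_eta h)).symm
  simpa only [Function.iterate_succ, Function.comp_apply, Function.iterate_zero, id_eq,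
    mul_assoc, map_mul, map_one, mul_one, one_mul, d] using h1

theorem kk_n0 (s r : Bool) (z : M) :
    (sh (kk s)) * ((c r) * z) = (c r) * ((sh (c r)) * ((kk s) * z)) := by
  have h1 := congrArg (fun w => w * z) (nat r (Ar_kk (M := M) s)).symm
  simpa only [Function.iterate_succ, Function.comp_apply, Function.iterate_zero, id_eq,
    mul_assoc, map_mul, map_one, mul_one, one_mul, d] using h1

theorem kk_B0 (s : Bool) (z : M) :
    (kk s) * (B * z) = (sh (c s)) * (B * (B * z)) := by
  have h1 := congrArg (fun w => w * z) (kk_B (M := M) s)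
  simpa only [Function.iterate_succ, Function.comp_apply, Function.iterate_zero, id_eq,
    mul_assoc, map_mul, map_one, mul_one, one_mul, d] using h1

theorem kk_n1 (s r : Bool) (z : M) :
    (sh (sh (kk s))) * ((sh (c r)) * z) = (sh (c r)) * ((sh (sh (c r))) * ((sh (kk s)) * z)) := by
  have h1 := congrArg (fun w => sh (w) * z) (nat r (Ar_kk (M := M) s)).symm
  simpa only [Function.iterate_succ, Function.comp_apply, Function.iterate_zero, id_eq,
    mul_assoc, map_mul, map_one, mul_one, one_mul, d] using h1

theorem kk_B1 (s : Bool) (z : M) :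
    (sh (kk s)) * ((sh B) * z) = (sh (sh (c s))) * ((sh B) * ((sh B) * z)) := by
  have h1 := congrArg (fun w => sh (w) * z) (kk_B (M := M) s)
  simpa only [Function.iterate_succ, Function.comp_apply, Function.iterate_zero, id_eq,
    mul_assoc, map_mul, map_one, mul_one, one_mul, d] using h1

theorem kk_n2 (s r : Bool) (z : M) :
    (sh (sh (sh (kk s)))) * ((sh (sh (c r))) * z) = (sh (sh (c r))) * ((sh (sh (sh (c r)))) * ((sh (sh (kk s))) * z)) := by
  have h1 := congrArg (fun w => sh (sh (w)) * z) (nat r (Ar_kk (M := M) s)).symm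
  simpa only [Function.iterate_succ, Function.comp_apply, Function.iterate_zero, id_eq,
    mul_assoc, map_mul, map_one, mul_one, one_mul, d] using h1

theorem kk_B2 (s : Bool) (z : M) :
    (sh (sh (kk s))) * ((sh (sh B)) * z) = (sh (sh (sh (c s)))) * ((sh (sh B)) * ((sh (sh B)) * z)) := by
  have h1 := congrArg (fun w => sh (sh (w)) * z) (kk_B (M := M) s)
  simpa only [Function.iterate_succ, Function.comp_apply, Function.iterate_zero, id_eq,
    mul_assoc, map_mul, map_one, mul_one, one_mul, d] using h1

theorem w1 :
    (sh (kk true)) * ((c false) * ((sh (c false)) * ((sh B) * B))) =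
      ((c false) * ((sh (sh (c true))) * ((sh (c false)) * ((sh B) * (B * B)))) : M) := by
  refine tl fun z => ?_
  simp only [mul_assoc, one_mul]
  calc (sh (kk true)) * ((c false) * ((sh (c false)) * ((sh B) * (B * z))))
    _ = (c false) * ((sh (c false)) * ((kk true) * ((sh (c false)) * ((sh B) * (B * z))))) := by
      rw [kk_n0 true false]
    _ = (c false) * ((sh (c false)) * ((sh (sh (c false))) * ((kk true) * ((sh B) * (B * z))))) := by
      rw [← kp_ar0 (c false)]
    _ = (c false) * ((sh (c false)) * ((sh (sh (c false))) * ((sh (sh B)) * ((kk true) * (B * z))))) := by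
      symm
      rw [kp_ar0 B]
    _ = (c false) * ((sh (c false)) * ((sh (sh (c false))) * ((sh (sh B)) * ((sh (c true)) * (B * (B * z)))))) := by
      rw [kk_B0 true]
    _ = (c false) * ((sh (c false)) * ((sh (sh (c false))) * ((sh (c true)) * ((sh (sh (c true))) * ((sh B) * (B * (B * z))))))) := by
      rw [k_sbc1 true]
    _ = (c false) * ((sh (sh (c true))) * ((sh (c false)) * ((sh B) * (B * (B * z))))) := by
      rw [← k_br_pmm1, k_mp2]

theorem w2 (h : IsTr Tr) :
    (sh (eta Tr)) * ((sh (c false)) * ((c false) * ((sh (c false)) * ((sh (sh (sh (c true)))) * ((sh (sh (c false))) * ((sh (sh B)) * ((sh B) * ((sh B) * (c true))))))))) =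
      ((eta Tr) * ((sh (sh (sh (c true)))) * ((sh (sh (c false))) * ((sh (sh B)) * ((sh (c true)) * ((sh (sh (c true))) * (B * B)))))) : M) := by
  refine tl fun z => ?_
  simp only [mul_assoc, one_mul]
  calc (sh (eta Tr)) * ((sh (c false)) * ((c false) * ((sh (c false)) * ((sh (sh (sh (c true)))) * ((sh (sh (c false))) * ((sh (sh B)) * ((sh B) * ((sh B) * ((c true) * z)))))))))
    _ = (sh (eta Tr)) * ((c false) * ((sh (c false)) * ((c false) * ((sh (sh (sh (c true)))) * ((sh (sh (c false))) * ((sh (sh B)) * ((sh B) * ((sh B) * ((c true) * z))))))))) := by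
      rw [k_br0 false]
    _ = (eta Tr) * ((c false) * ((sh (sh (sh (c true)))) * ((sh (sh (c false))) * ((sh (sh B)) * ((sh B) * ((sh B) * ((c true) * z))))))) := by
      rw [et_n0 h false]
    _ = (eta Tr) * ((c false) * ((sh (sh (sh (c true)))) * ((sh (sh (c false))) * ((sh (sh B)) * ((c true) * ((sh (c true)) * (B * ((sh (c true)) * (B * z))))))))) := by
      rw [k_sbc0 true, k_sbc0 true]
    _ = (eta Tr) * ((c false) * ((sh (sh (sh (c true)))) * ((sh (sh (c false))) * ((sh (sh B)) * ((c true) * ((sh (c true)) * ((sh (sh (c true))) * (B * (B * z))))))))) := by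
      symm
      rw [← k_bs0 (c true)]
    _ = (eta Tr) * ((sh (sh (sh (c true)))) * ((sh (sh (c false))) * ((sh (sh B)) * ((sh (c true)) * ((sh (sh (c true))) * (B * (B * z))))))) := by
      rw [← k_co0 (sh (c true)) false, ← k_co0 (c false) false, ← k_co0 B false, k_mp0]

theorem w3 :
    (c false) * (B * ((t true) * (c true))) =
      ((sh (t true)) * ((sh (c true)) * ((t true) * ((c true) * ((sh (c true)) * (sh B))))) : M) := by
  refine tl fun z => ?_
  simp only [mul_assoc, one_mul]
  calc (c false) * (B * ((t true) * ((c true) * z)))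
    _ = (c false) * ((t true) * ((c true) * ((t true) * ((c true) * (B * ((c true) * z)))))) := by
      rw [k_bt0 true]
    _ = (c false) * ((t true) * ((c true) * ((t true) * ((c true) * ((sh (c true)) * ((c true) * ((sh B) * z))))))) := by
      rw [k_bc0 true]
    _ = (sh (t true)) * ((c false) * ((c true) * ((t true) * ((c true) * ((sh (c true)) * ((c true) * ((sh B) * z))))))) := by
      rw [k_ct0 false true]
    _ = (sh (t true)) * ((t true) * ((c true) * ((sh (c true)) * ((c true) * ((sh B) * z))))) := by
      rw [k_mp0]
    _ = (sh (t true)) * ((t true) * ((sh (c true)) * ((c true) * ((sh (c true)) * ((sh B) * z))))) := by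
      symm
      rw [k_br0 true]
    _ = (sh (t true)) * ((sh (c true)) * ((t true) * ((c true) * ((sh (c true)) * ((sh B) * z))))) := by
      rw [← k_ts0 true (c true)]

theorem w4 :
    (c true) * ((t true) * ((c true) * ((t true) * ((t true) * ((c true) * (B * (t false))))))) =
      ((c true) * ((sh (t true)) * B) : M) := by
  refine tl fun z => ?_
  simp only [mul_assoc, one_mul]
  calc (c true) * ((t true) * ((c true) * ((t true) * ((t true) * ((c true) * (B * ((t false) * z)))))))
    _ = (c true) * ((t true) * ((c true) * ((t true) * ((t true) * ((c true) * ((t false) * ((c false) * ((t false) * ((c false) * (B * z)))))))))) := by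
      rw [k_bt0 false]
    _ = (c true) * ((t true) * ((c true) * ((t true) * ((t true) * ((sh (t false)) * ((t false) * ((c false) * (B * z)))))))) := by
      rw [k_ct0 true false, k_pm0]
    _ = (c true) * ((t true) * ((c true) * ((t true) * ((sh (t false)) * ((c false) * (B * z)))))) := by
      rw [← k_ts0 true (t false), k_tu0]
    _ = (c true) * ((t true) * ((c true) * ((t true) * ((c false) * ((t false) * (B * z)))))) := by
      rw [← k_ct0 false false]
    _ = (c true) * ((t true) * ((sh (t true)) * ((t false) * (B * z)))) := by
      rw [k_ct0 true true ((c false) * ((t false) * (B * z))), k_pm0]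
    _ = (c true) * ((sh (t true)) * (B * z)) := by
      rw [← k_ts0 true (t true), k_tu0]

theorem w5 :
    (c true) * ((sh (t true)) * (B * (c false))) =
      ((sh (c false)) * ((t true) * ((c false) * ((sh (c true)) * (sh B)))) : M) := by
  refine tl fun z => ?_
  simp only [mul_assoc, one_mul]
  calc (c true) * ((sh (t true)) * (B * ((c false) * z)))
    _ = (c true) * ((sh (t true)) * ((sh (c false)) * ((c false) * ((sh B) * z)))) := by
      rw [k_bc0 false]
    _ = (t true) * ((c true) * ((sh (c false)) * ((c false) * ((sh B) * z)))) := by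
      rw [k_cst0 true true]
    _ = (t true) * ((sh (c false)) * ((c false) * ((sh (c true)) * ((sh B) * z)))) := by
      rw [← k_br_mmp0]
    _ = (sh (c false)) * ((t true) * ((c false) * ((sh (c true)) * ((sh B) * z)))) := by
      rw [← k_ts0 true (c false)]

theorem w6 (h : IsTr Tr) :
    (sh (sh (eta Tr))) * ((sh (sh (sh (eta Tr)))) * ((sh (sh (sh (c false)))) * ((sh (sh (sh (t false)))) * ((sh (sh (kk false))) * ((sh (sh (sh (kk true)))) * ((c false) * ((sh (c false)) * ((sh B) * (B * (sh B)))))))))) =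
      ((c false) * ((sh (eta Tr)) * ((sh (sh (c true))) * ((sh (sh (sh (eta Tr)))) * ((sh (sh (sh (c false)))) * ((sh (sh (sh (t false)))) * ((sh (sh (c false))) * ((sh (sh (c false))) * ((sh (sh (sh (sh (sh (c true)))))) * ((sh (sh (sh (sh B)))) * ((sh (sh (sh (sh B)))) * ((sh B) * ((sh B) * B)))))))))))) : M) := by
  refine tl fun z => ?_
  simp only [mul_assoc, one_mul]
  calc (sh (sh (eta Tr))) * ((sh (sh (sh (eta Tr)))) * ((sh (sh (sh (c false)))) * ((sh (sh (sh (t false)))) * ((sh (sh (kk false))) * ((sh (sh (sh (kk true)))) * ((c false) * ((sh (c false)) * ((sh B) * (B * ((sh B) * z))))))))))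
    _ = (sh (sh (eta Tr))) * ((sh (sh (sh (eta Tr)))) * ((sh (sh (sh (c false)))) * ((sh (sh (sh (t false)))) * ((sh (sh (kk false))) * ((c false) * ((sh (c false)) * ((sh (sh (sh (kk true)))) * ((sh B) * (B * ((sh B) * z)))))))))) := by
      rw [k_co0 (sh (kk true)) false, k_co1 (kk true) false]
    _ = (sh (sh (eta Tr))) * ((sh (sh (sh (eta Tr)))) * ((sh (sh (sh (c false)))) * ((sh (sh (sh (t false)))) * ((sh (sh (kk false))) * ((c false) * ((sh (c false)) * ((sh B) * (B * ((sh (kk true)) * ((sh B) * z)))))))))) := by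
      symm
      rw [k_bs0 (kk true), k_bs1 (kk true)]
    _ = (sh (sh (eta Tr))) * ((sh (sh (sh (eta Tr)))) * ((sh (sh (sh (c false)))) * ((sh (sh (sh (t false)))) * ((sh (sh (kk false))) * ((c false) * ((sh (c false)) * ((sh B) * (B * ((sh (sh (c true))) * ((sh B) * ((sh B) * z))))))))))) := by
      rw [kk_B1 true]
    _ = (sh (sh (eta Tr))) * ((sh (sh (sh (eta Tr)))) * ((sh (sh (sh (c false)))) * ((sh (sh (sh (t false)))) * ((c false) * ((sh (sh (kk false))) * ((sh (c false)) * ((sh B) * (B * ((sh (sh (c true))) * ((sh B) * ((sh B) * z))))))))))) := by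
      rw [k_co0 (kk false) false]
    _ = (sh (sh (eta Tr))) * ((sh (sh (sh (eta Tr)))) * ((sh (sh (sh (c false)))) * ((sh (sh (sh (t false)))) * ((c false) * ((sh (c false)) * ((sh (sh (c false))) * ((sh (kk false)) * ((sh B) * (B * ((sh (sh (c true))) * ((sh B) * ((sh B) * z)))))))))))) := by
      symm
      rw [← kk_n1 false false]
    _ = (sh (sh (eta Tr))) * ((sh (sh (sh (eta Tr)))) * ((sh (sh (sh (c false)))) * ((sh (sh (sh (t false)))) * ((c false) * ((sh (c false)) * ((sh (sh (c false))) * ((sh (sh (c false))) * ((sh B) * ((sh B) * (B * ((sh (sh (c true))) * ((sh B) * ((sh B) * z))))))))))))) := by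
      rw [kk_B1 false]
    _ = (sh (sh (eta Tr))) * ((sh (sh (sh (eta Tr)))) * ((c false) * ((sh (sh (sh (c false)))) * ((sh (sh (sh (t false)))) * ((sh (c false)) * ((sh (sh (c false))) * ((sh (sh (c false))) * ((sh B) * ((sh B) * (B * ((sh (sh (c true))) * ((sh B) * ((sh B) * z))))))))))))) := by
      rw [k_co0 (sh (t false)) false, k_co0 (sh (c false)) false]
    _ = (c false) * ((sh (sh (eta Tr))) * ((sh (sh (sh (eta Tr)))) * ((sh (sh (sh (c false)))) * ((sh (sh (sh (t false)))) * ((sh (c false)) * ((sh (sh (c false))) * ((sh (sh (c false))) * ((sh B) * ((sh B) * (B * ((sh (sh (c true))) * ((sh B) * ((sh B) * z))))))))))))) := by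
      symm
      rw [← k_co0 (eta Tr) false, ← k_co0 (sh (eta Tr)) false]
    _ = (c false) * ((sh (sh (eta Tr))) * ((sh (sh (sh (eta Tr)))) * ((sh (sh (sh (c false)))) * ((sh (c false)) * ((sh (sh (sh (t false)))) * ((sh (sh (c false))) * ((sh (sh (c false))) * ((sh B) * ((sh B) * (B * ((sh (sh (c true))) * ((sh B) * ((sh B) * z))))))))))))) := by
      rw [k_co1 (t false) false]
    _ = (c false) * ((sh (sh (eta Tr))) * ((sh (c false)) * ((sh (sh (sh (eta Tr)))) * ((sh (sh (sh (c false)))) * ((sh (sh (sh (t false)))) * ((sh (sh (c false))) * ((sh (sh (c false))) * ((sh B) * ((sh B) * (B * ((sh (sh (c true))) * ((sh B) * ((sh B) * z))))))))))))) := by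
      symm
      rw [← k_co1 (eta Tr) false, ← k_co1 (c false) false]
    _ = (c false) * ((sh (sh (eta Tr))) * ((sh (c false)) * ((sh (sh (c false))) * ((sh (sh (c true))) * ((sh (sh (sh (eta Tr)))) * ((sh (sh (sh (c false)))) * ((sh (sh (sh (t false)))) * ((sh (sh (c false))) * ((sh (sh (c false))) * ((sh B) * ((sh B) * (B * ((sh (sh (c true))) * ((sh B) * ((sh B) * z))))))))))))))) := by
      symm
      rw [k_mp2]
    _ = (c false) * ((sh (sh (eta Tr))) * ((sh (c false)) * ((sh (sh (c false))) * ((sh (sh (c true))) * ((sh (sh (sh (eta Tr)))) * ((sh (sh (sh (c false)))) * ((sh (sh (sh (t false)))) * ((sh (sh (c false))) * ((sh (sh (c false))) * ((sh B) * ((sh B) * ((sh (sh (sh (c true)))) * ((sh (sh B)) * (B * ((sh B) * z))))))))))))))) := by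
      rw [k_bs0 (sh (c true)), k_bs0 B]
    _ = (c false) * ((sh (eta Tr)) * ((sh (sh (c true))) * ((sh (sh (sh (eta Tr)))) * ((sh (sh (sh (c false)))) * ((sh (sh (sh (t false)))) * ((sh (sh (c false))) * ((sh (sh (c false))) * ((sh B) * ((sh B) * ((sh (sh (sh (c true)))) * ((sh (sh B)) * ((sh (sh B)) * (B * z))))))))))))) := by
      symm
      rw [← k_bs0 B, ← et_n1 h false]
    _ = (c false) * ((sh (eta Tr)) * ((sh (sh (c true))) * ((sh (sh (sh (eta Tr)))) * ((sh (sh (sh (c false)))) * ((sh (sh (sh (t false)))) * ((sh (sh (c false))) * ((sh (sh (c false))) * ((sh (sh (sh (sh (sh (c true)))))) * ((sh B) * ((sh (sh (sh B))) * ((sh B) * ((sh (sh B)) * (B * z))))))))))))) := by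
      rw [k_bs1 (sh (c true)), k_bs1 (sh (sh (c true))), k_bs1 B]
    _ = (c false) * ((sh (eta Tr)) * ((sh (sh (c true))) * ((sh (sh (sh (eta Tr)))) * ((sh (sh (sh (c false)))) * ((sh (sh (sh (t false)))) * ((sh (sh (c false))) * ((sh (sh (c false))) * ((sh (sh (sh (sh (sh (c true)))))) * ((sh (sh (sh (sh B)))) * ((sh (sh (sh (sh B)))) * ((sh B) * ((sh B) * (B * z))))))))))))) := by
      symm
      rw [← k_bs1 (sh B), ← k_bs1 (sh B), ← k_bs1 B]

theorem w7 (h : IsTr Tr) :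
    (sh (eta Tr)) * ((sh (c false)) * ((sh (t false)) * ((c false) * ((c false) * ((sh (sh (sh (c true)))) * ((sh (sh B)) * (sh (sh B)))))))) =
      ((eta Tr) * ((c false) * ((sh (c true)) * ((c false) * ((sh (sh (sh (c true)))) * ((sh (sh B)) * ((sh (sh B)) * (sh (t false)))))))) : M) := by
  refine tl fun z => ?_
  simp only [mul_assoc, one_mul]
  calc (sh (eta Tr)) * ((sh (c false)) * ((sh (t false)) * ((c false) * ((c false) * ((sh (sh (sh (c true)))) * ((sh (sh B)) * ((sh (sh B)) * z)))))))
    _ = (sh (eta Tr)) * ((sh (c false)) * ((c false) * ((c false) * ((sh (sh (sh (c true)))) * ((sh (t false)) * ((sh (sh B)) * ((sh (sh B)) * z))))))) := by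
      rw [← k_ct0 false false, ← k_cst0 false false, ← k_ts1 false (sh (c true))]
    _ = (sh (eta Tr)) * ((sh (c false)) * ((c false) * ((c false) * ((sh (sh (sh (c true)))) * ((sh (sh B)) * ((sh (sh B)) * ((sh (t false)) * z))))))) := by
      symm
      rw [k_ts1 false B, k_ts1 false B]
    _ = (sh (eta Tr)) * ((c false) * ((sh (c false)) * ((sh (c true)) * ((c true) * ((sh (c false)) * ((c false) * ((c false) * ((sh (sh (sh (c true)))) * ((sh (sh B)) * ((sh (sh B)) * ((sh (t false)) * z))))))))))) := by
      symm
      rw [k_mp1, k_mp0]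
    _ = (eta Tr) * ((sh (c true)) * ((c true) * ((sh (c false)) * ((c false) * ((c false) * ((sh (sh (sh (c true)))) * ((sh (sh B)) * ((sh (sh B)) * ((sh (t false)) * z))))))))) := by
      rw [et_n0 h false]
    _ = (eta Tr) * ((c false) * ((sh (c true)) * ((c true) * ((c false) * ((c false) * ((sh (sh (sh (c true)))) * ((sh (sh B)) * ((sh (sh B)) * ((sh (t false)) * z))))))))) := by
      rw [k_br_ppm0]
    _ = (eta Tr) * ((c false) * ((sh (c true)) * ((c false) * ((sh (sh (sh (c true)))) * ((sh (sh B)) * ((sh (sh B)) * ((sh (t false)) * z))))))) := by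
      rw [k_pm0]

theorem q1 :
    (c true) * ((sh (sh (c true))) * ((sh B) * (sh B))) =
      ((sh (c false)) * ((sh (sh (c false))) * ((sh (c true)) * (B * (B * (c true))))) : M) := by
  refine tl fun z => ?_
  simp only [mul_assoc, one_mul]
  calc (c true) * ((sh (sh (c true))) * ((sh B) * ((sh B) * z)))
    _ = (c true) * ((sh (sh (c true))) * ((sh B) * ((sh B) * ((c false) * ((c true) * z))))) := by
      symm
      rw [k_mp0]
    _ = (c true) * ((sh (sh (c true))) * ((c false) * ((sh (c false)) * (B * ((sh (c false)) * (B * ((c true) * z))))))) := by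
      rw [k_sbc0 false, k_sbc0 false]
    _ = (c true) * ((sh (sh (c true))) * ((c false) * ((sh (c false)) * ((sh (sh (c false))) * (B * (B * ((c true) * z))))))) := by
      symm
      rw [← k_bs0 (c false)]
    _ = (sh (sh (c true))) * ((sh (c false)) * ((sh (sh (c false))) * (B * (B * ((c true) * z))))) := by
      rw [← k_co0 (c true) true, k_pm0]
    _ = (sh (c false)) * ((sh (sh (c false))) * ((sh (c true)) * (B * (B * ((c true) * z))))) := by
      symm
      rw [← k_br_pmm1]

theorem q2 :
    (c false) * ((sh (sh (c true))) * ((sh B) * (sh B))) =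
      ((sh (c true)) * ((sh (sh (c true))) * ((sh (c true)) * (B * (B * (c false))))) : M) := by
  refine tl fun z => ?_
  simp only [mul_assoc, one_mul]
  calc (c false) * ((sh (sh (c true))) * ((sh B) * ((sh B) * z)))
    _ = (c false) * ((sh (sh (c true))) * ((sh B) * ((sh B) * ((c true) * ((c false) * z))))) := by
      symm
      rw [k_pm0]
    _ = (c false) * ((sh (sh (c true))) * ((c true) * ((sh (c true)) * (B * ((sh (c true)) * (B * ((c false) * z))))))) := by
      rw [k_sbc0 true, k_sbc0 true]
    _ = (c false) * ((sh (sh (c true))) * ((c true) * ((sh (c true)) * ((sh (sh (c true))) * (B * (B * ((c false) * z))))))) := by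
      symm
      rw [← k_bs0 (c true)]
    _ = (sh (sh (c true))) * ((sh (c true)) * ((sh (sh (c true))) * (B * (B * ((c false) * z))))) := by
      rw [← k_co0 (c true) false, k_mp0]
    _ = (sh (c true)) * ((sh (sh (c true))) * ((sh (c true)) * (B * (B * ((c false) * z))))) := by
      symm
      rw [← k_br1 true]

theorem q1s (z : M) : (sh (c true)) * ((sh (sh (sh (c true)))) * ((sh (sh B)) * ((sh (sh B)) * z))) = (sh (sh (c false))) * ((sh (sh (sh (c false)))) * ((sh (sh (c true))) * ((sh B) * ((sh B) * ((sh (c true)) * z))))) := by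
  have h1 := congrArg (fun w => sh w * z) (q1 (M := M))
  simpa only [mul_assoc, map_mul] using h1

theorem q2s (z : M) : (c false) * ((sh (sh (c true))) * ((sh B) * ((sh B) * z))) = (sh (c true)) * ((sh (sh (c true))) * ((sh (c true)) * (B * (B * ((c false) * z))))) := by
  have h1 := congrArg (fun w => w * z) (q2 (M := M))
  simpa only [mul_assoc, map_mul] using h1

theorem w8 :
    (eta Tr) * ((c false) * ((sh (c true)) * ((c false) * ((sh (sh (sh (c true)))) * ((sh (sh B)) * ((sh (sh B)) * (sh (t false)))))))) =
      ((eta Tr) * ((sh (sh (c false))) * ((sh (sh (sh (c false)))) * ((sh (c true)) * ((sh (sh (c true))) * ((sh (c true)) * (B * (B * ((c false) * ((sh (c true)) * ((c false) * (sh (t false)))))))))))) : M) := by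
  refine tl fun z => ?_
  simp only [mul_assoc, one_mul]
  calc (eta Tr) * ((c false) * ((sh (c true)) * ((c false) * ((sh (sh (sh (c true)))) * ((sh (sh B)) * ((sh (sh B)) * ((sh (t false)) * z)))))))
    _ = (eta Tr) * ((c false) * ((sh (c true)) * ((sh (sh (sh (c true)))) * ((sh (sh B)) * ((c false) * ((sh (sh B)) * ((sh (t false)) * z))))))) := by
      rw [← k_co0 (sh (c true)) false, ← k_co0 B false]
    _ = (eta Tr) * ((c false) * ((sh (c true)) * ((sh (sh (sh (c true)))) * ((sh (sh B)) * ((sh (sh B)) * ((c false) * ((sh (t false)) * z))))))) := by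
      symm
      rw [k_co0 B false]
    _ = (eta Tr) * ((c false) * ((sh (sh (c false))) * ((sh (sh (sh (c false)))) * ((sh (sh (c true))) * ((sh B) * ((sh B) * ((sh (c true)) * ((c false) * ((sh (t false)) * z))))))))) := by
      rw [q1s]
    _ = (eta Tr) * ((sh (sh (c false))) * ((sh (sh (sh (c false)))) * ((c false) * ((sh (sh (c true))) * ((sh B) * ((sh B) * ((sh (c true)) * ((c false) * ((sh (t false)) * z))))))))) := by
      rw [← k_co0 (c false) false, ← k_co0 (sh (c false)) false]
    _ = (eta Tr) * ((sh (sh (c false))) * ((sh (sh (sh (c false)))) * ((sh (c true)) * ((sh (sh (c true))) * ((sh (c true)) * (B * (B * ((c false) * ((sh (c true)) * ((c false) * ((sh (t false)) * z))))))))))) := by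
      symm
      rw [← q2s]

theorem w9 :
    (c false) * ((sh (c false)) * ((c true) * ((t true) * ((c true) * ((c false) * ((sh (c true)) * ((c false) * (sh (t false))))))))) =
      ((sh (c true)) * ((c false) * (c false)) : M) := by
  refine tl fun z => ?_
  simp only [mul_assoc, one_mul]
  calc (c false) * ((sh (c false)) * ((c true) * ((t true) * ((c true) * ((c false) * ((sh (c true)) * ((c false) * ((sh (t false)) * z))))))))
    _ = (c false) * ((sh (c false)) * ((c true) * ((t true) * ((sh (c true)) * ((c false) * ((sh (t false)) * z)))))) := by
      rw [k_pm0]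
    _ = (sh (c true)) * ((c false) * ((sh (c false)) * ((t true) * ((sh (c true)) * ((c false) * ((sh (t false)) * z)))))) := by
      symm
      rw [k_br_pmm0]
    _ = (sh (c true)) * ((c false) * ((t true) * ((c false) * ((sh (t false)) * z)))) := by
      rw [k_ts0 true (c false), k_mp1]
    _ = (sh (c true)) * ((c false) * ((t true) * ((t false) * ((c false) * z)))) := by
      symm
      rw [← k_cst0 false false]
    _ = (sh (c true)) * ((c false) * ((c false) * z)) := by
      rw [k_tu0]

theorem w10 :
    (c true) * ((sh (c true)) * ((c false) * (c false))) =
      ((sh (c false)) * ((sh (c false)) * ((c true) * (sh (c true)))) : M) := by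
  refine tl fun z => ?_
  simp only [mul_assoc, one_mul]
  calc (c true) * ((sh (c true)) * ((c false) * ((c false) * z)))
    _ = (sh (c false)) * ((sh (c false)) * ((c true) * ((sh (c true)) * z))) := by
      rw [← k_br_mpp0, ← k_br_mpp0]

theorem w11 :
    (c false) * ((c false) * ((t true) * (c true))) =
      ((t true) * (c false) : M) := by
  refine tl fun z => ?_
  simp only [mul_assoc, one_mul]
  calc (c false) * ((c false) * ((t true) * ((c true) * z)))
    _ = (c false) * ((sh (t true)) * z) := by
      rw [k_ct0 false true, k_mp0]
    _ = (t true) * ((c false) * z) := by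
      symm
      rw [← k_cst0 false true]

theorem w12 :
    (c false) * ((sh (t true)) * ((sh (c false)) * B)) =
      ((sh B) * ((t true) * (c false)) : M) := by
  refine tl fun z => ?_
  simp only [mul_assoc, one_mul]
  calc (c false) * ((sh (t true)) * ((sh (c false)) * (B * z)))
    _ = (t true) * ((c false) * ((sh (c false)) * (B * z))) := by
      rw [k_cst0 false true]
    _ = (t true) * ((sh B) * ((c false) * z)) := by
      rw [← k_sbc0 false]
    _ = (sh B) * ((t true) * ((c false) * z)) := by
      rw [← k_ts0 true B]

theorem T_tm (h : IsTr Tr) : ap Tr (t true * c false) = 1 := by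
  rw [← c_sht, T2 h, h.hy]; exact tt' true

theorem T_tp (h : IsTr Tr) : ap Tr (t true * c true) = t true * t true := by
  rw [← c_sht, T2 h, h.hy]

/-- the body of the unit -/
def Y : M := (c false) * ((sh (c false)) * ((sh B) * B))

theorem Ar_Y : Ar (Y : M) 3 1 :=
  (Ar_c false).succ.mul ((Ar_c false).sh.mul (Ar_B.sh.mul Ar_B))

theorem T_v (h : IsTr Tr) : ap Tr ((sh (sh (c true))) * ((sh (c false)) * ((sh B) * ((c true) * (sh (c true)))))) = (sh (c true)) * ((c false) * (B * ((t true) * (c true)))) := by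
  have e : (sh (sh (c true))) * ((sh (c false)) * ((sh B) * ((c true) * (sh (c true))))) = sh ((sh (c true)) * ((c false) * B)) * (c true * sh (c true) : M) := by
    simp only [map_mul, mul_assoc]
  rw [e, T1 h, T2 h, h.hy]; simp only [mul_assoc]

theorem T_T_v (h : IsTr Tr) : ap Tr ((sh (c true)) * ((c false) * (B * ((t true) * (c true))))) = (c true) * ((t true) * ((c true) * ((t true) * ((t true) * ((c true) * B))))) := by
  have e : (sh (t true)) * ((sh (c true)) * ((t true) * ((c true) * ((sh (c true)) * (sh B))))) = sh ((t true) * (c true)) * ((t true * c true) * sh (c true * B) : M) := by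
    simp only [map_mul, mul_assoc]
  rw [T1 h, w3, e, T1 h, T2 h, T_tp h]; simp only [mul_assoc]

theorem kk_Y (h : IsTr Tr) : kk true * ap Tr Y = ap Tr ((c false) * ((sh (sh (c true))) * ((sh (c false)) * ((sh B) * (B * B))))) := by
  rw [← T1 h, Y, w1]

theorem et_W (h : IsTr Tr) (z : M) :
    eta Tr * (c false * (sh (ap Tr ((c false) * ((sh (sh (c true))) * ((sh (c false)) * ((sh B) * (B * B)))))) * z)) = (c true) * ((t true) * ((c true) * ((t true) * ((t true) * ((c true) * B))))) * z := by
  have e : sh (eta Tr * c false) * (c false * (sh ((c false) * ((sh (sh (c true))) * ((sh (c false)) * ((sh B) * (B * B))))) * c true)) =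
      eta Tr * (sh ((sh (sh (c true))) * ((sh (c false)) * ((sh B) * ((c true) * (sh (c true)))))) * (B * (B * 1))) := by
    have := w2 h
    simpa only [map_mul, mul_assoc, mul_one] using this
  rw [T_slide h false, Bool.not_false, ← mul_assoc, ← mul_assoc, ← T1 h, e, E1 h, mul_one,
    T_v h, T_T_v h]

/-- the counit -/
def mkAl (Tr : M) : M :=
  eta Tr * (sh (eta Tr * (c false * t false)) * (kk false * sh (kk true)))

theorem Ar_mkAl (h : IsTr Tr) : Ar (mkAl Tr) 0 2 :=
  (Ar_eta h).mul (((Ar_eta h).mul ((Ar_c false).mul (Ar_t2 false))).sh.succ.mul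
    ((Ar_kk false).succ.succ.mul (Ar_kk true).sh))

theorem dual1 (h : IsTr Tr) : mkAl Tr * sh (ap Tr Y) = 1 := by
  apply ext1
  · exact (Ar_mkAl h).succ.mul (Ar_T h Ar_Y).sh
  · exact Ar_one 1
  obtain ⟨W, hW⟩ : ∃ W : M, W = ap Tr ((c false) * ((sh (sh (c true))) * ((sh (c false)) * ((sh B) * (B * B))))) := ⟨_, rfl⟩
  calc mkAl Tr * sh (ap Tr Y) * B
      = eta Tr * (sh (eta Tr * (c false * t false)) * (kk false * (sh (kk true * ap Tr Y) * B))) := by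
        rw [mkAl]; simp only [map_mul, mul_assoc]
    _ = eta Tr * (sh (eta Tr * (c false * t false)) * (sh (sh W) * (kk false * B))) := by
        rw [kk_Y h, ← hW, ← km_ar0]
    _ = eta Tr * (sh (eta Tr * (c false * (t false * (sh W * c false)))) * (B * (B * 1))) := by
        rw [kk_B]; simp only [map_mul, mul_assoc, mul_one]
    _ = ap Tr (eta Tr * (c false * ((t false * sh W) * c false))) := by
        rw [E1 h]; simp only [mul_assoc, mul_one]
    _ = ap Tr (eta Tr * (c false * (sh W * (t false * c false)))) := by
        rw [← t_sh]; simp only [mul_assoc]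
    _ = ap Tr ((c true) * ((t true) * ((c true) * ((t true) * ((t true) * ((c true) * (B * (t false))))))) * c false) := by
        rw [hW, et_W h]; simp only [mul_assoc]
    _ = ap Tr (sh (c false) * ((t true * c false) * sh (c true * B))) := by
        rw [w4]; simp only [mul_assoc]; rw [w5]; simp only [map_mul, mul_assoc]
    _ = B := by
        rw [T1 h, T2 h, T_tm h, one_mul, ← mul_assoc, show c false * c true = (1 : M) from cc false,
          one_mul]
    _ = 1 * B := (one_mul B).symm

theorem T_X (h : IsTr Tr) : (sh (eta Tr)) * ((sh (c false)) * ((sh (t false)) * ((c false) * ((c false) * ((sh (sh (sh (c true)))) * ((sh (sh B)) * (sh (sh B)))))))) = (sh (c true)) * ((c false) * (c false)) := by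
  have e : (eta Tr) * ((sh (sh (c false))) * ((sh (sh (sh (c false)))) * ((sh (c true)) * ((sh (sh (c true))) * ((sh (c true)) * (B * (B * ((c false) * ((sh (c true)) * ((c false) * (sh (t false)))))))))))) = eta Tr * (sh ((sh (c false)) * ((sh (sh (c false))) * ((c true) * ((sh (c true)) * (c true))))) *
      (B * (B * ((c false) * ((sh (c true)) * ((c false) * (sh (t false)))))))) := by
    simp only [map_mul, mul_assoc]
  have e2 : (sh (c false)) * ((sh (sh (c false))) * ((c true) * ((sh (c true)) * (c true)))) = sh ((c false) * (sh (c false))) * ((sh (c true) * c true) * sh (c true) : M) := by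
    simp only [map_mul, mul_assoc]; rw [braid]
  rw [w7 h, w8, e, E1 h, e2, T1 h, T2 h, T1 h, h.hy, ← w9]; simp only [mul_assoc]

theorem dual2 (h : IsTr Tr) : sh (mkAl Tr) * ap Tr Y = 1 := by
  apply ext1
  · exact (Ar_mkAl h).sh.mul (Ar_T h Ar_Y).succ
  · exact Ar_one 1
  have e : (sh (c false)) * ((sh (c false)) * ((c true) * (sh (c true)))) = sh ((c false) * (c false)) * (c true * sh (c true) : M) := by
    simp only [map_mul, mul_assoc]
  have hu : ap Tr (c true * ((sh (eta Tr)) * ((sh (c false)) * ((sh (t false)) * ((c false) * ((c false) * ((sh (sh (sh (c true)))) * ((sh (sh B)) * (sh (sh B)))))))))) = t true * c false := by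
    rw [T_X h, w10, e, T1 h, T2 h, h.hy, ← w11]; simp only [mul_assoc]
  calc sh (mkAl Tr) * ap Tr Y * B
      = ap Tr ((sh (sh (eta Tr))) * ((sh (sh (sh (eta Tr)))) * ((sh (sh (sh (c false)))) * ((sh (sh (sh (t false)))) * ((sh (sh (kk false))) * ((sh (sh (sh (kk true)))) * ((c false) * ((sh (c false)) * ((sh B) * (B * (sh B))))))))))) := by
        rw [← T1 h, ← T2 h, mkAl, Y]; simp only [map_mul, mul_assoc]
    _ = ap Tr (c false * (sh (eta Tr * (sh (c true * ((sh (eta Tr)) * ((sh (c false)) * ((sh (t false)) * ((c false) * ((c false) * ((sh (sh (sh (c true)))) * ((sh (sh B)) * (sh (sh B)))))))))) *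
        (B * (B * 1)))) * B)) := by
        rw [w6 h]; simp only [map_mul, mul_assoc, mul_one]
    _ = ap Tr (sh B * (t true * c false)) := by
        rw [E1 h, hu, ← w12]; simp only [map_mul, mul_assoc, mul_one]
    _ = 1 * B := by rw [T1 h, T_tm h, mul_one, one_mul]

theorem T_be (h : IsTr Tr) {be : M} (hb : Ar be 2 0) (s : Bool) :
    ap Tr be = c (!s) * (t (!s) * be) := by
  have n1 : c s * (sh (c s) * be) = sh be := by
    have h := nat s hb
    simpa only [d, mul_assoc, map_one, mul_one, map_mul] using h
  have n2 : sh (c (!s)) * (c (!s) * sh be) = be := by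
    rw [← n1, ← mul_assoc (c (!s)), cc', one_mul, ← mul_assoc, shcc', one_mul]
  conv_lhs => rw [← n2]
  rw [T1 h, T2 h, h.hy]

theorem tbe_tr (h : IsTr Tr) {be : M} (hb : Ar be 2 0) : t true * be = sh (t true) * be := by
  have e1 : ∀ z : M, c true * (t true * (be * z)) = c false * (t false * (be * z)) := fun z => by
    have h1 := (T_be h hb false).symm.trans (T_be h hb true)
    simpa only [mul_assoc, Bool.not_true, Bool.not_false] using congrArg (· * z) h1
  have e2 : ∀ z : M, t true * (sh (t true) * (c true * (c true * (be * z)))) = be * z := fun z => by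
    simpa only [mul_assoc] using congrArg (· * z) (N_beta hb)
  refine tl fun z => ?_
  simp only [mul_assoc, one_mul]
  calc (t true) * (be * z)
    _ = (t true) * ((t true) * ((sh (t true)) * ((c true) * ((c true) * (be * z))))) := by
      conv_lhs => rw [← e2]
    _ = (t true) * ((sh (t true)) * ((c true) * ((sh (t true)) * ((c true) * (be * z))))) := by
      rw [← k_ts0 true (t true), ← k_cst0 true true]
    _ = (t true) * ((sh (t true)) * ((c true) * ((c true) * ((t true) * (be * z))))) := by
      symm
      rw [k_ct0 true true]
    _ = (t true) * ((sh (t true)) * ((c true) * ((c false) * ((t false) * (be * z))))) := by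
      rw [e1]
    _ = (sh (t true)) * (be * z) := by
      rw [← k_ts0 true (t true), k_pm0, k_tu0]

theorem tbe_inv {be : M} (hb : t true * be = sh (t true) * be) :
    t false * be = sh (t false) * be := by
  have e1 : ∀ z : M, t true * (be * z) = sh (t true) * (be * z) := fun z => by
    rw [← mul_assoc, ← mul_assoc, hb]
  refine tl fun z => ?_
  simp only [mul_assoc, one_mul]
  calc (t false) * (be * z)
    _ = (sh (t false)) * ((sh (t true)) * ((t false) * (be * z))) := by
      symm
      rw [k_ut1]
    _ = (sh (t false)) * ((t false) * ((sh (t true)) * (be * z))) := by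
      rw [k_ts0 false (t true)]
    _ = (sh (t false)) * ((t false) * ((t true) * (be * z))) := by
      rw [← e1]
    _ = (sh (t false)) * (be * z) := by
      rw [k_ut0]

theorem mate {al be : M} (ha : Ar al 0 2) (d1 : al * sh be = 1)
    (d2 : sh al * be = 1) (s : Bool) (hb : t s * be = sh (t s) * be) :
    al * t s = al * sh (t s) := by
  have a : ∀ x, x * al = al * sh (sh x) := fun x => arel ha x
  calc al * t s = al * (t s * al) * sh be := by rw [mul_assoc al, mul_assoc, d1, mul_one]
    _ = al * (al * sh (sh (t s) * be)) := by rw [a (t s)]; simp only [map_mul, mul_assoc]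
    _ = (al * al) * (sh (t s) * sh be) := by rw [← hb]; simp only [map_mul, mul_assoc]
    _ = al * ((sh (sh al) * sh (t s)) * sh be) := by rw [a al]; simp only [mul_assoc]
    _ = al * (sh (t s) * sh (sh al * be)) := by
        rw [← map_mul, t_sh]; simp only [map_mul, mul_assoc]
    _ = al * sh (t s) := by rw [d2, map_one, mul_one]

end TR

section Assembly
open Paper BCStruct

variable {α : Type*}

/-- the monoid of an extensional algebra, with its combinators -/
@[reducible] def mkBCM (S : BCStruct α) (hS : S.IsExt) : BCM α where
  mul := S.comp
  one := S.I
  ap := S.ap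
  B := S.B
  c s := if s then S.Cp else S.Cm
  mul_assoc a b x := by
    have h := congrArg (fun z => S.ap (S.ap z a) b) hS.hAlpha
    simp only [comp, hS.hB, hS.hCp] at h
    show S.ap (S.ap S.B (S.ap (S.ap S.B a) b)) x = S.ap (S.ap S.B a) (S.ap (S.ap S.B b) x)
    rw [← h, hS.hB]
  one_mul a := by
    show S.ap (S.ap S.B S.I) a = a
    rw [hS.hLam, hS.hI]
  mul_one a := by
    have h := congrArg (fun z => S.ap z a) hS.hRho
    simp only [hS.hCp, hS.hLam, hS.hI] at h
    exact h
  mul_def _ _ := rfl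
  ap_mul a b x := hS.hB a b x
  one_ap a := hS.hI a
  hC s a b x := by
    cases s
    · exact hS.hCm a b x
    · exact hS.hCp a b x
  hC2 s r a b := by
    cases s <;> cases r
    · rfl
    · exact (hS.hC2 a b).symm
    · exact hS.hC2 a b
    · rfl
  sh_one := hS.hLam
  rho s := by
    cases s
    · exact (hS.hC2 _ _).symm.trans (hS.hRho.trans hS.hLam)
    · exact hS.hRho.trans hS.hLam
  alpha := hS.hAlpha
  cc s := by
    have h : S.ap S.B (S.ap S.B S.I) = S.I := by rw [hS.hLam, hS.hLam]
    cases s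
    · exact hS.hCox1m.trans h
    · exact hS.hCox1p.trans h
  cox2 s := by
    cases s
    · exact hS.hCox2m
    · exact hS.hCox2p
  cox3 s := by
    cases s
    · exact hS.hCox3m
    · exact hS.hCox3p
  hBC s := by
    cases s
    · exact hS.hBCm
    · exact hS.hBCp

/-- the balanced version -/
@[reducible] def mkTW (S : BCStruct α) (hS : S.IsExt) {tp tm : α} (hb : S.IsBalanced tp tm) :
    TW α :=
  letI I0 := mkBCM S hS
  { I0 with
    t := fun s => if s then tp else tm
    Ar_t := fun s => by
      unfold Ar
      rw [pow_one, ← cB true]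
      cases s
      · exact hb.arM.symm
      · exact hb.arP.symm
    tt := fun s => by
      cases s
      · exact hb.invMP.trans hS.hLam
      · exact hb.invPM.trans hS.hLam
    bul_t := fun s a => by
      rw [l2 true]
      cases s
      · exact hb.natBulM a
      · exact hb.natBulP a
    Bt := fun s => by
      cases s
      · exact hb.natBM
      · exact hb.natBP }

end Assembly

end BCAux

open BCAux
/-- A balanced extensional BC±I-algebra is traced iff it is ribbon. -/
theorem stmt_17 {α : Type*} (S : Paper.BCStruct α) (hS : S.IsExt)
    {tp tm : α} (hBal : S.IsBalanced tp tm) :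
    (∃ Tr : α, S.IsTrace tp tm Tr) ↔ (∃ al be : α, S.IsRibbon tp tm al be) := by
  let I1 : TW α := mkTW S hS hBal
  have hp : ∀ n : ℕ, S.pow S.B n = (BCM.B : α) ^ n := by
    intro n
    induction n with
    | zero => rw [pow_zero]; rfl
    | succ n ih =>
      rw [pow_succ', ← ih]; rfl
  have hcB : ∀ x : α, S.ap (S.ap S.Cp S.B) x = R x := fun x => cB true x
  constructor
  · rintro ⟨Tr, h⟩
    have hT : IsTr Tr := by
      refine ⟨?_, ?_, ?_⟩
      · have := h.leftT
        rw [hcB, hp] at this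
        unfold Ar
        rw [pow_one]
        exact this
      · have := h.rightT
        rw [hcB] at this
        exact this
      · intro s
        cases s
        · exact h.yankM
        · exact h.yankP
    have ha := Ar_mkAl hT
    have hb := Ar_T hT Ar_Y
    have h1 := dual1 hT
    have h2 := dual2 hT
    have h3 := tbe_tr hT hb
    have h4 := mate ha h1 h2 true h3
    have h5 := mate ha h1 h2 false (tbe_inv h3)
    refine ⟨mkAl Tr, BCM.ap Tr Y, ⟨?_, ?_, h1.trans hS.hLam.symm, h2.trans hS.hLam.symm⟩, h4, h5⟩
    · rw [hp]
      have : R (mkAl Tr) = sh (mkAl Tr) * BCM.B ^ 2 := by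
        simpa only [Ar, pow_zero, mul_one] using ha
      exact this
    · rw [hp]
      have : bul (BCM.ap Tr Y) * BCM.B ^ 3 = sh (BCM.ap Tr Y) := by
        rw [pow_succ', ← mul_assoc]
        simpa only [Ar, pow_zero, mul_one, R] using hb
      exact this
  · rintro ⟨al, be, ⟨h1, h2, h3, h4⟩, h5, h6⟩
    rw [hp] at h1 h2
    have ha : Ar al 0 2 := by
      unfold Ar; rw [pow_zero, mul_one]; exact h1
    have hb : Ar be 2 0 := by
      have h2' : bul be * BCM.B ^ 3 = sh be := h2
      unfold Ar; rw [pow_zero, mul_one, ← h2', R, mul_assoc, ← pow_succ']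
    have d1 : al * sh be = 1 := h3.trans hS.hLam
    have d2 : sh al * be = 1 := h4.trans hS.hLam
    have tb := tbe hb d1 d2 h5
    have hk := kap hb tb
    have hka : Ar (BCM.c true * (TW.t true * be)) 2 0 := (Ar_c true).mul ((Ar_t2 true).mul hb)
    have hy := mkTr_yank ha d2 rfl hk
    refine ⟨mkTr al (BCM.c true * (TW.t true * be)), ?_, ?_, hy true, hy false, ?_⟩
    · have := mkTr_left (BCM.c true * (TW.t true * be)) ha
      rw [hcB, hp]
      unfold Ar at this
      rw [pow_one] at this
      exact this
    · rw [hcB]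
      exact mkTr_right al hka
    · rw [hcB]
      exact mkTr_exch ha hka
end
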